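/- arXiv:0904.1906 — 2 statements merged into one kernel-verified Lean document; each statement's English description precedes it below -/
import Mathlib

section
/- Let α₁, α₂ be real numbers such that 1, α₁, α₂ are linearly independent over ℤ. Then there exists a sequence of integer two-dimensional vectors (x₁(i), x₂(i)), i = 1, 2, ..., such that x₁(i) > 0 and x₂(i) > 0 for every i, and ‖α₁x₁(i) + α₂x₂(i)‖ · (max{x₁(i), x₂(i)})^τ → 0 as i → ∞. -/
/-- distance from a real number to the nearest integer -/
noncomputable def nint (ξ : ℝ) : ℝ := |ξ - round ξ|

/-- `1, α₁, α₂` are linearly independent over `ℤ` -/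
def ZLinIndep (α₁ α₂ : ℝ) : Prop :=
  ∀ a b c : ℤ, (a : ℝ) + b * α₁ + c * α₂ = 0 → a = 0 ∧ b = 0 ∧ c = 0

/-- the golden ratio τ = (1+√5)/2 -/
noncomputable def tau : ℝ := (1 + Real.sqrt 5) / 2

/-!
Call `L` the linear form and suppose that `ε ≤ |L u| ‖u‖ ^ τ` for all integer vectors `u` with
positive coefficients of `α₁` and `α₂`, where `‖u‖` is the height. If these coefficients of `u` do
not have the same sign, then each line parallel to `u` on which the determinant with `u` is at least
`2 ‖u‖ ^ 2` meets the positive quadrant in a segment longer than a period, so that some `±w + m u`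
is positive of height at most `|det (u, w)| / ‖u‖`. This turns the assumption into a lower bound for
arbitrary pairs `u, w`.

For a best approximation `w` and a Dirichlet vector `z` in a cube of the same size, apply that bound
to a Lagrange–Gauss reduced basis of the lattice spanned by `w` and `z`. Since `(τ - 1) τ = 1`, this
gives best approximations `u` with `‖u‖ = C K ^ (τ - 1)`, `|L u| ≤ 16 / K ^ 2` and `K` arbitrarily
large. A Dirichlet vector `w` in a box with sides `‖u‖` and `K` then satisfies
`|det (u, w)| = O(‖u‖)`, whereas the remaining minors of `(u, w)` are `O(1 / K)`. The shorter vector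
of a reduced basis of the lattice spanned by `u` and `w` has bounded height and value `O(1 / K)`,
which contradicts the linear independence as `K` tends to infinity.
-/

section Plane

/-- The determinant of a pair of vectors of the plane, i.e. the coordinate of their wedge product.
The plane is `ℝ × ℝ` because the norm of this type is the supremum norm. -/
def wedge (p q : ℝ × ℝ) : ℝ := p.1 * q.2 - p.2 * q.1

variable {p q : ℝ × ℝ}

lemma norm_eq_max_abs (p : ℝ × ℝ) : ‖p‖ = max |p.1| |p.2| := rfl

lemma abs_fst_le_norm (p : ℝ × ℝ) : |p.1| ≤ ‖p‖ := norm_fst_le p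

lemma abs_snd_le_norm (p : ℝ × ℝ) : |p.2| ≤ ‖p‖ := norm_snd_le p

lemma norm_prodSwap (p : ℝ × ℝ) : ‖p.swap‖ = ‖p‖ := max_comm _ _

lemma wedge_swap (p q : ℝ × ℝ) : wedge p.swap q.swap = -wedge p q := by
  simp only [wedge, Prod.fst_swap, Prod.snd_swap]; ring

lemma wedge_neg_left (p q : ℝ × ℝ) : wedge (-p) q = -wedge p q := by
  simp only [wedge, Prod.fst_neg, Prod.snd_neg]; ring

lemma wedge_neg_right (p q : ℝ × ℝ) : wedge p (-q) = -wedge p q := by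
  simp only [wedge, Prod.fst_neg, Prod.snd_neg]; ring

lemma wedge_anticomm (p q : ℝ × ℝ) : wedge p q = -wedge q p := by
  simp only [wedge]; ring

lemma wedge_zsmul_right (p q : ℝ × ℝ) (n : ℤ) : wedge p (n • q) = n * wedge p q := by
  simp only [wedge, Prod.smul_fst, Prod.smul_snd, ← Int.cast_smul_eq_zsmul ℝ, smul_eq_mul]; ring

lemma wedge_add_zsmul_self (p q : ℝ × ℝ) (n : ℤ) : wedge p (q + n • p) = wedge p q := by
  simp only [wedge, Prod.fst_add, Prod.snd_add, Prod.smul_fst, Prod.smul_snd,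
    ← Int.cast_smul_eq_zsmul ℝ, smul_eq_mul]
  ring

lemma abs_wedge_le (p q : ℝ × ℝ) : |wedge p q| ≤ 2 * ‖p‖ * ‖q‖ := by
  have h₁ : |p.1 * q.2| ≤ ‖p‖ * ‖q‖ := by
    rw [abs_mul]; gcongr; exacts [abs_fst_le_norm p, abs_snd_le_norm q]
  have h₂ : |p.2 * q.1| ≤ ‖p‖ * ‖q‖ := by
    rw [abs_mul]; gcongr; exacts [abs_snd_le_norm p, abs_fst_le_norm q]
  calc |wedge p q| ≤ |p.1 * q.2| + |p.2 * q.1| := abs_sub _ _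
    _ ≤ 2 * ‖p‖ * ‖q‖ := by linarith

lemma norm_mul_norm_le_of_abs_coord_le
    (h : |p.1| = ‖p‖ ∧ |q.1| ≤ ‖p‖ ∨ |p.2| = ‖p‖ ∧ |q.2| ≤ ‖p‖) :
    ‖p‖ * ‖q‖ ≤ |wedge p q| + ‖p‖ ^ 2 := by
  have coord_le : ∀ x y z w : ℝ, |x| = ‖p‖ → |y| ≤ ‖p‖ → |z| ≤ ‖p‖ → x * w = wedge p q + y * z ∨
      x * w = -wedge p q + y * z → ‖p‖ * |w| ≤ |wedge p q| + ‖p‖ ^ 2 := by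
    intro x y z w hx hy hz hw
    have hyz : |y * z| ≤ ‖p‖ ^ 2 := by rw [abs_mul, sq]; gcongr
    rw [← hx, ← abs_mul, hx]
    rcases hw with hw | hw <;> rw [hw]
    · exact (abs_add_le _ _).trans (by gcongr)
    · exact (abs_add_le _ _).trans (by rw [abs_neg]; gcongr)
  have hp : ‖p‖ * ‖p‖ ≤ |wedge p q| + ‖p‖ ^ 2 := by nlinarith [abs_nonneg (wedge p q)]
  rw [norm_eq_max_abs q, mul_max_of_nonneg _ _ (norm_nonneg p)]
  rcases h with ⟨hp', hq⟩ | ⟨hp', hq⟩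
  · exact max_le ((by gcongr : ‖p‖ * |q.1| ≤ ‖p‖ * ‖p‖).trans hp)
      (coord_le p.1 p.2 q.1 q.2 hp' (abs_snd_le_norm p) hq (.inl (by rw [wedge]; ring)))
  · exact max_le (coord_le p.2 p.1 q.2 q.1 hp' (abs_fst_le_norm p) hq (.inr (by rw [wedge]; ring)))
      ((by gcongr : ‖p‖ * |q.2| ≤ ‖p‖ * ‖p‖).trans hp)

lemma exists_pos_add_zsmul (hp : 0 < p.1) (hp₂ : p.2 ≤ 0) (hle : -p.2 ≤ p.1)
    (hdet : 2 * p.1 ^ 2 ≤ wedge p q) :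
    ∃ m : ℤ, 0 < (q + m • p).1 ∧ 0 < (q + m • p).2 ∧ p.1 * ‖q + m • p‖ ≤ wedge p q ∧
      p.1 * |(m : ℝ)| ≤ |q.1| + p.1 := by
  obtain ⟨m, ⟨hpos, hle_p⟩, -⟩ := existsUnique_add_zsmul_mem_Ioc hp q.1 0
  rw [zero_add] at hle_p
  have hwedge := wedge_add_zsmul_self p q m
  have hfst : (q + m • p).1 = q.1 + m * p.1 := by rw [← zsmul_eq_mul]; rfl
  rw [zsmul_eq_mul, ← hfst] at hpos hle_p
  set r := q + m • p
  have hbound : -p.2 * r.1 ≤ p.1 ^ 2 := by nlinarith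
  have hr₂ : 0 < r.2 := by
    refine pos_of_mul_pos_right (a := p.1) ?_ hp.le
    rw [wedge] at hwedge
    nlinarith
  refine ⟨m, hpos, hr₂, ?_, ?_⟩
  · rw [norm_eq_max_abs, abs_of_pos hpos, abs_of_pos hr₂, mul_max_of_nonneg _ _ hp.le, ← hwedge]
    rw [← hwedge] at hdet
    refine max_le (by nlinarith) ?_
    rw [wedge]
    nlinarith
  · calc p.1 * |(m : ℝ)| = |r.1 - q.1| := by
          rw [hfst, add_sub_cancel_left, abs_mul, abs_of_pos hp, mul_comm]
      _ ≤ |r.1| + |q.1| := abs_sub _ _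
      _ ≤ |q.1| + p.1 := by rw [abs_of_pos hpos]; linarith

/-- The line through `q` with the nonpositive slope of `p` crosses the positive quadrant in a
segment which, for a large determinant, contains a full period. -/
lemma exists_pos_zsmul_add_zsmul (hp : p ≠ 0) (hsign : p.1 * p.2 ≤ 0)
    (hdet : 2 * ‖p‖ ^ 2 ≤ |wedge p q|) :
    ∃ s m : ℤ, |s| = 1 ∧ 0 < (s • q + m • p).1 ∧ 0 < (s • q + m • p).2 ∧
      ‖p‖ * ‖s • q + m • p‖ ≤ |wedge p q| ∧ ‖p‖ * |(m : ℝ)| ≤ ‖q‖ + ‖p‖ := by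
  wlog hle : |p.2| ≤ |p.1| generalizing p q
  · obtain ⟨s, m, hs, hfst, hsnd, hnorm, hm⟩ := @this p.swap q.swap
      (by simpa [Prod.ext_iff, and_comm] using hp) (by simpa [mul_comm] using hsign)
      (by rwa [norm_prodSwap, wedge_swap, abs_neg]) (le_of_not_ge hle)
    have hswap : s • q.swap + m • p.swap = (s • q + m • p).swap := rfl
    rw [hswap, norm_prodSwap, norm_prodSwap, wedge_swap, abs_neg] at hnorm
    rw [norm_prodSwap, norm_prodSwap] at hm
    rw [hswap] at hfst hsnd
    exact ⟨s, m, hs, hsnd, hfst, hnorm, hm⟩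
  wlog hpos : 0 < p.1 generalizing p
  · have hp₁ : p.1 ≠ 0 := fun h₁ ↦ hp <| Prod.ext h₁ <| by simpa [h₁] using hle
    obtain ⟨s, m, h⟩ := @this (-p) (neg_ne_zero.mpr hp) (by simpa using hsign)
      (by rwa [norm_neg, wedge_neg_left, abs_neg]) (by simpa using hle)
      (neg_pos.mpr (lt_of_le_of_ne (not_lt.mp hpos) hp₁))
    refine ⟨s, -m, ?_⟩
    simpa only [norm_neg, wedge_neg_left, abs_neg, smul_neg, neg_smul, Int.cast_neg] using h
  wlog hwedge : 0 ≤ wedge p q generalizing q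
  · obtain ⟨s, m, h⟩ := @this (-q) (by rwa [wedge_neg_right, abs_neg])
      (by rw [wedge_neg_right]; linarith)
    refine ⟨-s, m, ?_⟩
    simpa only [norm_neg, wedge_neg_right, abs_neg, smul_neg, neg_smul] using h
  have hnorm : ‖p‖ = p.1 := (max_eq_left hle).trans (abs_of_pos hpos)
  rw [abs_of_pos hpos] at hle
  rw [hnorm, abs_of_nonneg hwedge] at hdet ⊢
  obtain ⟨m, hfst, hsnd, hbound, hm⟩ := exists_pos_add_zsmul hpos
    (nonpos_of_mul_nonpos_right hsign hpos) ((neg_le_abs _).trans hle) hdet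
  exact ⟨1, m, abs_one, by simpa using hfst, by simpa using hsnd, by simpa using hbound,
    hm.trans (by gcongr; exact abs_fst_le_norm q)⟩

lemma norm_mul_norm_le_abs_wedge_of_snd_eq (hle : |p.2| ≤ p.1) (hpq : p.1 ≤ ‖q‖)
    (hq : q.2 = ‖q‖) (hsub : ‖q‖ ≤ ‖q - p‖) (hadd : ‖q‖ ≤ ‖q + p‖) :
    p.1 * ‖q‖ ≤ |wedge p q| := by
  have hq₁ := abs_le.mp (abs_fst_le_norm q)
  have hp₂ := abs_le.mp hle
  suffices h : p.2 * q.1 ≤ 0 by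
    refine le_trans ?_ (le_abs_self _)
    rw [wedge, hq]
    linarith
  -- Otherwise `q - p` or `q + p` is shorter than `q`.
  by_contra! h
  rw [norm_eq_max_abs (q - p), le_max_iff, le_abs, le_abs] at hsub
  rw [norm_eq_max_abs (q + p), le_max_iff, le_abs, le_abs] at hadd
  simp only [Prod.fst_sub, Prod.snd_sub, Prod.fst_add, Prod.snd_add] at hsub hadd
  rcases pos_and_pos_or_neg_and_neg_of_mul_pos h with ⟨hp, hq'⟩ | ⟨hp, hq'⟩ <;> grind

lemma norm_mul_norm_le_abs_wedge_of_fst_eq (hp : 0 < p.1) (hpq : p.1 ≤ ‖q‖)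
    (hq : q.1 = ‖q‖) (hsub : ‖q‖ ≤ ‖q - p‖) : p.1 * ‖q‖ ≤ |wedge p q| := by
  have hq₂ := abs_le.mp (abs_snd_le_norm q)
  have hsnd : ‖q‖ ≤ |q.2 - p.2| := by
    refine (le_max_iff.mp hsub).resolve_left (not_le.mpr ?_)
    rw [Prod.fst_sub, hq, Real.norm_eq_abs, abs_of_nonneg (by linarith)]
    linarith
  rw [wedge, hq]
  rcases le_abs.mp hsnd with h | h
  · exact le_trans (by nlinarith) (le_abs_self _)
  · exact le_trans (by nlinarith) (neg_le_abs _)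

/-- The hypotheses say that the pair is Lagrange–Gauss reduced for the supremum norm. -/
lemma norm_mul_norm_le_abs_wedge (hpq : ‖p‖ ≤ ‖q‖) (hsub : ‖q‖ ≤ ‖q - p‖)
    (hadd : ‖q‖ ≤ ‖q + p‖) : ‖p‖ * ‖q‖ ≤ |wedge p q| := by
  wlog hle : |p.2| ≤ |p.1| generalizing p q
  · have := @this p.swap q.swap (by simpa only [norm_prodSwap])
      (by rw [← norm_prodSwap, ← norm_prodSwap (q.swap - _)]; exact hsub)
      (by rw [← norm_prodSwap, ← norm_prodSwap (q.swap + _)]; exact hadd) (le_of_not_ge hle)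
    rwa [norm_prodSwap, norm_prodSwap, wedge_swap, abs_neg] at this
  wlog hpos : 0 ≤ p.1 generalizing p
  · have := @this (-p) (by rwa [norm_neg]) (by rwa [sub_neg_eq_add])
      (by rwa [← sub_eq_add_neg]) (by simpa using hle) (by simpa using (not_le.mp hpos).le)
    rwa [norm_neg, wedge_neg_left, abs_neg] at this
  have hnorm : ‖p‖ = p.1 := (max_eq_left hle).trans (abs_of_nonneg hpos)
  rw [abs_of_nonneg hpos] at hle
  rw [hnorm] at hpq ⊢
  rcases hpos.eq_or_lt with hzero | hpos
  · rw [← hzero, zero_mul]; exact abs_nonneg _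
  wlog hq : q.1 = ‖q‖ ∨ q.2 = ‖q‖ generalizing q
  · have hneg : (-q).1 = ‖q‖ ∨ (-q).2 = ‖q‖ := by
      have := max_choice |q.1| |q.2|
      rw [Prod.fst_neg, Prod.snd_neg]
      grind [norm_eq_max_abs]
    have := @this (-q)
    rw [norm_neg, ← neg_add', norm_neg, neg_add_eq_sub, norm_sub_rev, wedge_neg_right,
      abs_neg] at this
    exact this hpq hadd hsub hneg
  rcases hq with hq | hq
  · exact norm_mul_norm_le_abs_wedge_of_fst_eq hpos hpq hq hsub
  · exact norm_mul_norm_le_abs_wedge_of_snd_eq hle hpq hq hsub hadd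

end Plane

section LinearForm

/-- The integer linear form `x₀ + α x₁ + β x₂`. -/
def linForm (α β : ℝ) : ℤ × ℤ × ℤ →ₗ[ℤ] ℝ where
  toFun u := u.1 + α * u.2.1 + β * u.2.2
  map_add' u v := by
    simp only [Prod.fst_add, Prod.snd_add]; push_cast; ring
  map_smul' n u := by
    simp only [Prod.smul_fst, Prod.smul_snd, smul_eq_mul, ← Int.cast_smul_eq_zsmul ℝ,
      RingHom.id_apply]
    push_cast; ring

/-- The coefficients of `α` and `β` in the linear form attached to an integer vector; the norm of
this vector of the plane is the height of the approximation. -/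
def planar : ℤ × ℤ × ℤ →ₗ[ℤ] ℝ × ℝ where
  toFun u := (u.2.1, u.2.2)
  map_add' u v := by simp
  map_smul' n u := by simp

/-- The `2 × 2` minors of a pair of integer vectors that involve the value of the linear form. Up to
a change of coordinates they are, together with the `wedge` of the planar parts, the components of
the cross product in space. -/
def crossTerm (α β : ℝ) (u v : ℤ × ℤ × ℤ) : ℝ × ℝ :=
  linForm α β u • planar v - linForm α β v • planar u

variable {α β : ℝ} {u v w : ℤ × ℤ × ℤ}

lemma linForm_apply (α β : ℝ) (u : ℤ × ℤ × ℤ) :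
    linForm α β u = u.1 + α * u.2.1 + β * u.2.2 := rfl

lemma planar_apply (u : ℤ × ℤ × ℤ) : planar u = ((u.2.1 : ℝ), (u.2.2 : ℝ)) := rfl

lemma planar_ne_zero_iff : planar u ≠ 0 ↔ u.2 ≠ 0 := by
  simp [planar_apply, Prod.ext_iff]

lemma exists_norm_planar_eq_natCast (u : ℤ × ℤ × ℤ) : ∃ n : ℕ, ‖planar u‖ = n :=
  ⟨max u.2.1.natAbs u.2.2.natAbs, by simp [planar_apply, Nat.cast_natAbs]⟩

lemma one_le_norm_planar (hu : planar u ≠ 0) : 1 ≤ ‖planar u‖ := by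
  obtain ⟨n, hn⟩ := exists_norm_planar_eq_natCast u
  have hpos := norm_pos_iff.mpr hu
  rw [hn] at hpos ⊢
  exact_mod_cast hpos

lemma abs_linForm_zsmul (α β : ℝ) (n : ℤ) (u : ℤ × ℤ × ℤ) :
    |linForm α β (n • u)| = |(n : ℝ)| * |linForm α β u| := by
  rw [map_smul, zsmul_eq_mul, abs_mul]

lemma norm_planar_zsmul (n : ℤ) (u : ℤ × ℤ × ℤ) :
    ‖planar (n • u)‖ = |(n : ℝ)| * ‖planar u‖ := by
  rw [map_smul, ← Int.cast_smul_eq_zsmul ℝ, norm_smul, Real.norm_eq_abs]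

lemma crossTerm_anticomm (α β : ℝ) (u v : ℤ × ℤ × ℤ) :
    crossTerm α β u v = -crossTerm α β v u := (neg_sub _ _).symm

lemma crossTerm_add_zsmul_self (α β : ℝ) (u v : ℤ × ℤ × ℤ) (n : ℤ) :
    crossTerm α β u (v + n • u) = crossTerm α β u v := by
  simp only [crossTerm, map_add, map_smul, ← Int.cast_smul_eq_zsmul ℝ]
  module

lemma wedge_planar_crossTerm_left (α β : ℝ) (u v : ℤ × ℤ × ℤ) :
    wedge (planar u) (crossTerm α β u v) = linForm α β u * wedge (planar u) (planar v) := by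
  simp only [wedge, crossTerm, Prod.fst_sub, Prod.snd_sub, Prod.smul_fst, Prod.smul_snd,
    smul_eq_mul]
  ring

lemma norm_crossTerm_le (α β : ℝ) (u v : ℤ × ℤ × ℤ) : ‖crossTerm α β u v‖ ≤
    |linForm α β u| * ‖planar v‖ + |linForm α β v| * ‖planar u‖ := by
  simpa only [crossTerm, norm_smul, Real.norm_eq_abs] using
    norm_sub_le (linForm α β u • planar v) (linForm α β v • planar u)

lemma abs_linForm_mul_abs_wedge_le (α β : ℝ) (u v : ℤ × ℤ × ℤ) :
    |linForm α β u| * |wedge (planar u) (planar v)| ≤ 2 * ‖planar u‖ * ‖crossTerm α β u v‖ := by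
  rw [← abs_mul, ← wedge_planar_crossTerm_left]
  exact abs_wedge_le _ _

lemma abs_linForm_le_of_norm_mul_norm_le (hu : planar u ≠ 0) (hv : planar v ≠ 0)
    (h : ‖planar u‖ * ‖planar v‖ ≤ |wedge (planar u) (planar v)|) :
    |linForm α β u| ≤ 2 * ‖crossTerm α β u v‖ / ‖planar v‖ := by
  have hu' := norm_pos_iff.mpr hu
  rw [le_div_iff₀ (norm_pos_iff.mpr hv)]
  refine le_of_mul_le_mul_left ?_ hu'
  calc ‖planar u‖ * (|linForm α β u| * ‖planar v‖)
      = |linForm α β u| * (‖planar u‖ * ‖planar v‖) := by ring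
    _ ≤ |linForm α β u| * |wedge (planar u) (planar v)| := by gcongr
    _ ≤ 2 * ‖planar u‖ * ‖crossTerm α β u v‖ := abs_linForm_mul_abs_wedge_le ..
    _ = ‖planar u‖ * (2 * ‖crossTerm α β u v‖) := by ring

lemma zsmul_eq_zsmul_of_wedge_eq_zero (hdet : wedge (planar u) (planar v) = 0)
    (hcross : ‖crossTerm α β u v‖ < 1) : v.2.1 • u = u.2.1 • v ∧ v.2.2 • u = u.2.2 • v := by
  have hdet' : u.2.1 * v.2.2 = u.2.2 * v.2.1 := by
    rw [wedge, sub_eq_zero] at hdet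
    simp only [planar_apply] at hdet
    exact_mod_cast hdet
  have hreal : (u.2.1 : ℝ) * v.2.2 = u.2.2 * v.2.1 := by exact_mod_cast hdet'
  -- As the determinant vanishes, the other two minors are integers, hence zero.
  have hfst : (crossTerm α β u v).1 = (u.1 * v.2.1 - v.1 * u.2.1 : ℤ) := by
    simp only [crossTerm, linForm_apply, planar_apply, Prod.fst_sub, Prod.smul_fst, smul_eq_mul]
    push_cast; linear_combination -β * hreal
  have hsnd : (crossTerm α β u v).2 = (u.1 * v.2.2 - v.1 * u.2.2 : ℤ) := by
    simp only [crossTerm, linForm_apply, planar_apply, Prod.snd_sub, Prod.smul_snd, smul_eq_mul]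
    push_cast; linear_combination α * hreal
  have h₁ := (abs_fst_le_norm _).trans_lt hcross
  have h₂ := (abs_snd_le_norm _).trans_lt hcross
  rw [hfst, ← Int.cast_abs, ← Int.cast_one, Int.cast_lt, Int.abs_lt_one_iff] at h₁
  rw [hsnd, ← Int.cast_abs, ← Int.cast_one, Int.cast_lt, Int.abs_lt_one_iff] at h₂
  simp only [Prod.ext_iff, Prod.smul_fst, Prod.smul_snd, smul_eq_mul]
  grind

lemma nint_le_abs_linForm (α β : ℝ) (u : ℤ × ℤ × ℤ) :
    nint (α * u.2.1 + β * u.2.2) ≤ |linForm α β u| := by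
  refine (round_le _ (-u.1)).trans_eq ?_
  rw [linForm_apply]
  push_cast
  ring_nf

end LinearForm

section Reduction

lemma exists_forall_le_of_natCast {ι : Type*} {S : Set ι} (hS : S.Nonempty) {f : ι → ℝ}
    (hf : ∀ x, ∃ n : ℕ, f x = n) : ∃ x ∈ S, ∀ y ∈ S, f x ≤ f y := by
  choose g hg using hf
  obtain ⟨x, hx, hmin⟩ := exists_minimalFor_of_wellFoundedLT (· ∈ S) g hS
  refine ⟨x, hx, fun y hy ↦ ?_⟩
  rw [hg, hg, Nat.cast_le]
  exact (le_total (g x) (g y)).elim id (hmin hy)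

variable (α β : ℝ)

lemma exists_reduced_pair (u₀ v₀ : ℤ × ℤ × ℤ) : ∃ u v : ℤ × ℤ × ℤ,
    |wedge (planar u) (planar v)| = |wedge (planar u₀) (planar v₀)| ∧
    ‖crossTerm α β u v‖ = ‖crossTerm α β u₀ v₀‖ ∧ ‖planar u‖ ≤ ‖planar v‖ ∧
    ‖planar v‖ ≤ ‖planar u₀‖ + ‖planar v₀‖ ∧
    ‖planar u‖ * ‖planar v‖ ≤ |wedge (planar u) (planar v)| := by
  let S : Set ((ℤ × ℤ × ℤ) × (ℤ × ℤ × ℤ)) := {x |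
    |wedge (planar x.1) (planar x.2)| = |wedge (planar u₀) (planar v₀)| ∧
    ‖crossTerm α β x.1 x.2‖ = ‖crossTerm α β u₀ v₀‖}
  have swap_mem {u v} (h : (u, v) ∈ S) : (v, u) ∈ S := by
    simpa only [S, Set.mem_ofPred_eq, wedge_anticomm (planar v), crossTerm_anticomm α β v, abs_neg,
      norm_neg] using h
  have add_mem {u v} (n : ℤ) (h : (u, v) ∈ S) : (u, v + n • u) ∈ S := by
    simpa only [S, Set.mem_ofPred_eq, crossTerm_add_zsmul_self, map_add, map_smul,
      wedge_add_zsmul_self] using h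
  obtain ⟨⟨u, v⟩, huv, hmin⟩ := exists_forall_le_of_natCast (S := S) ⟨(u₀, v₀), rfl, rfl⟩
    (f := fun x ↦ ‖planar x.1‖ + ‖planar x.2‖) fun x ↦ by
      obtain ⟨m, hm⟩ := exists_norm_planar_eq_natCast x.1
      obtain ⟨n, hn⟩ := exists_norm_planar_eq_natCast x.2
      exact ⟨m + n, by rw [hm, hn, Nat.cast_add]⟩
  wlog hle : ‖planar u‖ ≤ ‖planar v‖ generalizing u v
  · exact this v u (swap_mem huv) (fun y hy ↦ (add_comm _ _).trans_le (hmin y hy))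
      (le_of_not_ge hle)
  have hv (n : ℤ) : ‖planar v‖ ≤ ‖planar v + n • planar u‖ := by
    have := hmin _ (add_mem n huv)
    rw [map_add, map_smul] at this
    linarith
  refine ⟨u, v, huv.1, huv.2, hle, ?_, norm_mul_norm_le_abs_wedge hle ?_ ?_⟩
  · linarith [hmin (u₀, v₀) ⟨rfl, rfl⟩, norm_nonneg (planar u)]
  · simpa [sub_eq_add_neg] using hv (-1)
  · simpa using hv 1

end Reduction

section BestApproximation

/-- A best approximation (minimal point) of the linear form `x₀ + α x₁ + β x₂`: every integer
vector of smaller positive height gives the form a larger absolute value. Height-zero vectors,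
which make the form an integer constant, are excluded. -/
def IsBestApprox (α β : ℝ) (u : ℤ × ℤ × ℤ) : Prop :=
  planar u ≠ 0 ∧
    ∀ w, planar w ≠ 0 → ‖planar w‖ < ‖planar u‖ → |linForm α β u| < |linForm α β w|

variable {α β : ℝ} {u v w : ℤ × ℤ × ℤ}

lemma exists_isBestApprox_le (α β : ℝ) (hv : planar v ≠ 0) : ∃ u, IsBestApprox α β u ∧
    ‖planar u‖ ≤ ‖planar v‖ ∧ |linForm α β u| ≤ |linForm α β v| := by
  obtain ⟨u, ⟨hu, huv⟩, hmin⟩ := exists_forall_le_of_natCast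
    (S := {u | planar u ≠ 0 ∧ |linForm α β u| ≤ |linForm α β v|}) ⟨v, hv, le_rfl⟩
    exists_norm_planar_eq_natCast
  refine ⟨u, ⟨hu, fun w hw hlt ↦ huv.trans_lt ?_⟩, hmin v ⟨hv, le_rfl⟩, huv⟩
  by_contra! hle
  exact hlt.not_ge (hmin w ⟨hw, hle⟩)

lemma IsBestApprox.abs_le_of_zsmul_eq_zsmul (hu : IsBestApprox α β u) (hw : planar w ≠ 0)
    {m n : ℤ} (h : n • w = m • u) : |n| ≤ |m| := by
  by_contra! hlt
  have hlt' : |(m : ℝ)| < |(n : ℝ)| := by exact_mod_cast hlt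
  have hn : 0 < |(n : ℝ)| := (abs_nonneg _).trans_lt hlt'
  have hnorm := congrArg (‖planar ·‖) h
  have hform := congrArg (|linForm α β ·|) h
  simp only [norm_planar_zsmul, abs_linForm_zsmul] at hnorm hform
  have hsmaller : ‖planar w‖ < ‖planar u‖ := by
    refine lt_of_mul_lt_mul_left ?_ hn.le
    rw [hnorm]
    exact mul_lt_mul_of_pos_right hlt' (norm_pos_iff.mpr hu.1)
  refine (hu.2 w hw hsmaller).not_ge (le_of_mul_le_mul_left ?_ hn)
  rw [hform]
  gcongr

lemma IsBestApprox.wedge_ne_zero (hu : IsBestApprox α β u) (hw : planar w ≠ 0)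
    (hcross : ‖crossTerm α β u w‖ < 1)
    (hcoord : |(planar w).1| < |(planar u).1| ∨ |(planar w).2| < |(planar u).2|) :
    wedge (planar u) (planar w) ≠ 0 := by
  intro hdet
  obtain ⟨h₁, h₂⟩ := zsmul_eq_zsmul_of_wedge_eq_zero hdet hcross
  have h₁' := hu.abs_le_of_zsmul_eq_zsmul hw h₁.symm
  have h₂' := hu.abs_le_of_zsmul_eq_zsmul hw h₂.symm
  simp only [planar_apply] at hcoord
  rcases hcoord with h | h
  · exact h.not_ge (by exact_mod_cast h₁')
  · exact h.not_ge (by exact_mod_cast h₂')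

lemma ZLinIndep.exists_pos_le_abs_linForm (h : ZLinIndep α β) (N : ℝ) :
    ∃ δ > 0, ∀ u, planar u ≠ 0 → ‖planar u‖ ≤ N → δ ≤ |linForm α β u| := by
  have hfin : (Metric.closedBall (0 : ℤ × ℤ) N).Finite :=
    (isCompact_closedBall 0 N).finite_of_discrete
  have hpos : ∀ p : ℤ × ℤ, p ≠ 0 → 0 < nint (α * p.1 + β * p.2) := by
    intro p hp
    refine abs_pos.mpr fun h₀ ↦ hp ?_
    have := h (-round (α * p.1 + β * p.2)) p.1 p.2 (by push_cast; linarith)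
    exact Prod.ext this.2.1 this.2.2
  have hev : ∀ᶠ δ in nhdsWithin (0 : ℝ) (Set.Ioi 0), ∀ p ∈ Metric.closedBall (0 : ℤ × ℤ) N,
      p ≠ 0 → δ ≤ nint (α * p.1 + β * p.2) := by
    refine (Filter.eventually_all_finite hfin).mpr fun p _ ↦ ?_
    refine Filter.eventually_imp_distrib_left.mpr fun hp ↦ ?_
    filter_upwards [Ioc_mem_nhdsGT (hpos p hp)] with δ hδ using hδ.2
  obtain ⟨δ, hδ, hδpos⟩ := (hev.and self_mem_nhdsWithin).exists
  refine ⟨δ, hδpos, fun u hu hN ↦ (hδ u.2 ?_ (planar_ne_zero_iff.mp hu)).trans ?_⟩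
  · rwa [mem_closedBall_zero_iff]
  · exact nint_le_abs_linForm α β u

end BestApproximation

section Dirichlet

lemma exists_ne_abs_fract_sub_le {ι : Type*} {s : Finset ι} (hs : 1 < s.card) (g : ι → ℝ) :
    ∃ x ∈ s, ∃ y ∈ s, x ≠ y ∧ |Int.fract (g x) - Int.fract (g y)| ≤ 1 / (s.card - 1) := by
  have hm : (0 : ℝ) < s.card - 1 := sub_pos.mpr (by exact_mod_cast hs)
  have hmaps : ∀ x ∈ s, ⌊Int.fract (g x) * (s.card - 1)⌋ ∈ Finset.Ico (0 : ℤ) (s.card - 1) := by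
    intro x _
    have hnonneg := Int.fract_nonneg (g x)
    have hlt := Int.fract_lt_one (g x)
    refine Finset.mem_Ico.mpr ⟨Int.floor_nonneg.mpr (mul_nonneg hnonneg hm.le), Int.floor_lt.mpr ?_⟩
    push_cast
    nlinarith
  obtain ⟨x, hx, y, hy, hne, hfloor⟩ :=
    Finset.exists_ne_map_eq_of_card_lt_of_maps_to (by rw [Int.card_Ico]; lia) hmaps
  refine ⟨x, hx, y, hy, hne, ?_⟩
  have hlt := Int.abs_sub_lt_one_of_floor_eq_floor hfloor
  rw [← sub_mul, abs_mul, abs_of_pos hm] at hlt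
  exact (le_div_iff₀ hm).mpr hlt.le

lemma exists_abs_linForm_le_of_box (α β : ℝ) {X Y : ℝ} (hX : 0 < X) (hY : 0 < Y)
    (hXY : 1 < X * Y) : ∃ w, planar w ≠ 0 ∧ |(planar w).1| < X ∧ |(planar w).2| < Y ∧
      |linForm α β w| ≤ 2 / (X * Y) := by
  let s := Finset.range ⌈X⌉₊ ×ˢ Finset.range ⌈Y⌉₊
  have hcard : X * Y ≤ s.card := by
    rw [Finset.card_product, Finset.card_range, Finset.card_range, Nat.cast_mul]
    gcongr <;> exact Nat.le_ceil _
  have hs : 1 < s.card := by exact_mod_cast hXY.trans_le hcard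
  obtain ⟨x, hx, y, hy, hne, hxy⟩ :=
    exists_ne_abs_fract_sub_le hs fun p : ℕ × ℕ ↦ α * p.1 + β * p.2
  have hdist {Z : ℝ} {i j : ℕ} (hi : i < ⌈Z⌉₊) (hj : j < ⌈Z⌉₊) : |((i : ℝ) - j)| < Z := by
    have := Nat.lt_ceil.mp hi
    have := Nat.lt_ceil.mp hj
    rw [abs_sub_lt_iff]
    constructor <;> linarith [Nat.cast_nonneg (α := ℝ) i, Nat.cast_nonneg (α := ℝ) j]
  simp only [s, Finset.mem_product, Finset.mem_range] at hx hy
  refine ⟨(⌊α * y.1 + β * y.2⌋ - ⌊α * x.1 + β * x.2⌋, x.1 - y.1, x.2 - y.2), ?_, ?_, ?_, ?_⟩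
  · simpa [planar_apply, Prod.ext_iff, sub_eq_zero] using hne
  · simpa [planar_apply] using hdist hx.1 hy.1
  · simpa [planar_apply] using hdist hx.2 hy.2
  · have hs₂ : (2 : ℝ) ≤ s.card := by exact_mod_cast hs
    calc _ = |Int.fract (α * x.1 + β * x.2) - Int.fract (α * y.1 + β * y.2)| := by
          rw [linForm_apply, Int.fract, Int.fract]; push_cast; ring_nf
      _ ≤ 1 / (s.card - 1) := hxy
      _ ≤ 2 / s.card := by rw [div_le_div_iff₀] <;> linarith
      _ ≤ 2 / (X * Y) := by gcongr

lemma ZLinIndep.exists_lt_norm_planar {α β : ℝ} (h : ZLinIndep α β) (N : ℝ) :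
    ∃ u, IsBestApprox α β u ∧ N < ‖planar u‖ := by
  obtain ⟨δ, hδ, hle⟩ := h.exists_pos_le_abs_linForm N
  have hX : 1 < max 2 (4 / δ) := by simp
  obtain ⟨v, hv, -, -, hval⟩ := exists_abs_linForm_le_of_box α β (Y := 1)
    (zero_lt_one.trans hX) one_pos (by rwa [mul_one])
  obtain ⟨u, hu, -, huv⟩ := exists_isBestApprox_le α β hv
  refine ⟨u, hu, lt_of_not_ge fun hN ↦ (hle u hu.1 hN).not_gt (huv.trans_lt (hval.trans_lt ?_))⟩
  rw [mul_one, div_lt_iff₀ (by positivity)]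
  calc 2 < δ * (4 / δ) := by rw [mul_div_cancel₀ _ hδ.ne']; norm_num
    _ ≤ δ * max 2 (4 / δ) := by gcongr; exact le_max_right _ _

variable {α β : ℝ} {u : ℤ × ℤ × ℤ}

lemma IsBestApprox.exists_wedge_ne_zero (hu : IsBestApprox α β u) (hlarge : 4 < ‖planar u‖) :
    ∃ w, ‖planar w‖ ≤ ‖planar u‖ ∧ wedge (planar u) (planar w) ≠ 0 ∧
      ‖crossTerm α β u w‖ ≤ 4 / ‖planar u‖ := by
  have hpos : 0 < ‖planar u‖ := by linarith
  obtain ⟨w, hw, hw₁, hw₂, hval⟩ :=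
    exists_abs_linForm_le_of_box α β hpos hpos (by nlinarith)
  have hlt : ‖planar w‖ < ‖planar u‖ := max_lt hw₁ hw₂
  have hcross : ‖crossTerm α β u w‖ ≤ 4 / ‖planar u‖ :=
    calc ‖crossTerm α β u w‖
        ≤ |linForm α β u| * ‖planar w‖ + |linForm α β w| * ‖planar u‖ := norm_crossTerm_le ..
      _ ≤ |linForm α β w| * ‖planar u‖ + |linForm α β w| * ‖planar u‖ := by
          have := (hu.2 w hw hlt).le
          gcongr
      _ ≤ 2 / (‖planar u‖ * ‖planar u‖) * ‖planar u‖ +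
            2 / (‖planar u‖ * ‖planar u‖) * ‖planar u‖ := by gcongr
      _ = 4 / ‖planar u‖ := by field_simp; norm_num
  have hcoord : |(planar w).1| < |(planar u).1| ∨ |(planar w).2| < |(planar u).2| :=
    (lt_max_iff.mp hlt).imp (abs_fst_le_norm _).trans_lt (abs_snd_le_norm _).trans_lt
  exact ⟨w, hlt.le, hu.wedge_ne_zero hw (hcross.trans_lt ((div_lt_one hpos).mpr hlarge)) hcoord,
    hcross⟩

/-- The box is elongated along the axis on which `planar u` is small. -/
lemma IsBestApprox.exists_wedge_ne_zero_of_le {K : ℝ} (hu : IsBestApprox α β u)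
    (hK : 18 < K) (huK : ‖planar u‖ ≤ K) (hval : |linForm α β u| ≤ 16 / K ^ 2) :
    ∃ w, ‖planar w‖ ≤ K ∧ |linForm α β w| ≤ 2 / (‖planar u‖ * K) ∧
      wedge (planar u) (planar w) ≠ 0 ∧ ‖crossTerm α β u w‖ ≤ 18 / K ∧
      ‖planar u‖ * ‖planar w‖ ≤ |wedge (planar u) (planar w)| + ‖planar u‖ ^ 2 := by
  have hK₀ : 0 < K := by linarith
  have hu₁ := one_le_norm_planar hu.1
  have hu₀ : 0 < ‖planar u‖ := by linarith
  suffices h : ∃ w, planar w ≠ 0 ∧ ‖planar w‖ ≤ K ∧ |linForm α β w| ≤ 2 / (‖planar u‖ * K) ∧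
      (|(planar u).1| = ‖planar u‖ ∧ |(planar w).1| < ‖planar u‖ ∨
        |(planar u).2| = ‖planar u‖ ∧ |(planar w).2| < ‖planar u‖) by
    obtain ⟨w, hw, hwK, hwval, hcoord⟩ := h
    have hcross : ‖crossTerm α β u w‖ ≤ 18 / K :=
      calc ‖crossTerm α β u w‖
          ≤ |linForm α β u| * ‖planar w‖ + |linForm α β w| * ‖planar u‖ := norm_crossTerm_le ..
        _ ≤ 16 / K ^ 2 * K + 2 / (‖planar u‖ * K) * ‖planar u‖ := by gcongr
        _ = 18 / K := by field_simp; norm_num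
    refine ⟨w, hwK, hwval, hu.wedge_ne_zero hw (hcross.trans_lt ((div_lt_one hK₀).mpr hK)) ?_,
      hcross, norm_mul_norm_le_of_abs_coord_le ?_⟩
    · exact hcoord.imp (fun ⟨hmax, hlt⟩ ↦ hlt.trans_eq hmax.symm)
        (fun ⟨hmax, hlt⟩ ↦ hlt.trans_eq hmax.symm)
    · exact hcoord.imp (And.imp_right le_of_lt) (And.imp_right le_of_lt)
  have hbox : 1 < ‖planar u‖ * K := by nlinarith
  rcases max_choice |(planar u).1| |(planar u).2| with hmax | hmax
  · obtain ⟨w, hw, hw₁, hw₂, hwval⟩ := exists_abs_linForm_le_of_box α β hu₀ hK₀ hbox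
    exact ⟨w, hw, max_le (hw₁.le.trans huK) hw₂.le, hwval, .inl ⟨hmax.symm, hw₁⟩⟩
  · obtain ⟨w, hw, hw₁, hw₂, hwval⟩ :=
      exists_abs_linForm_le_of_box α β hK₀ hu₀ (by rwa [mul_comm])
    exact ⟨w, hw, max_le hw₁.le (hw₂.le.trans huK), mul_comm K _ ▸ hwval, .inr ⟨hmax.symm, hw₂⟩⟩

end Dirichlet

section PositivelyBad

/-- The linear form `x₀ + α x₁ + β x₂` is badly approximable with exponent `t` and constant `ε` by
integer vectors with positive coefficients of `α` and `β`. -/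
def PositivelyBad (α β t ε : ℝ) : Prop :=
  ∀ u, 0 < (planar u).1 → 0 < (planar u).2 → ε ≤ |linForm α β u| * ‖planar u‖ ^ t

variable {α β t ε : ℝ} {u v w : ℤ × ℤ × ℤ}

lemma PositivelyBad.le_of_mul_pos (hbad : PositivelyBad α β t ε)
    (hu : 0 < (planar u).1 * (planar u).2) : ε ≤ |linForm α β u| * ‖planar u‖ ^ t := by
  rcases pos_and_pos_or_neg_and_neg_of_mul_pos hu with ⟨h₁, h₂⟩ | ⟨h₁, h₂⟩
  · exact hbad u h₁ h₂
  · have := hbad (-u)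
    simp only [map_neg, Prod.fst_neg, Prod.snd_neg, norm_neg, abs_neg] at this
    exact this (neg_pos.mpr h₁) (neg_pos.mpr h₂)

lemma PositivelyBad.le_of_two_mul_sq_le (hbad : PositivelyBad α β t ε) (ht : 0 ≤ t)
    (hu : planar u ≠ 0) (hsign : (planar u).1 * (planar u).2 ≤ 0)
    (hdet : 2 * ‖planar u‖ ^ 2 ≤ |wedge (planar u) (planar w)|) :
    ε ≤ (|linForm α β w| + (‖planar w‖ / ‖planar u‖ + 1) * |linForm α β u|) *
      (|wedge (planar u) (planar w)| / ‖planar u‖) ^ t := by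
  obtain ⟨s, m, hs, hfst, hsnd, hnorm, hm⟩ := exists_pos_zsmul_add_zsmul hu hsign hdet
  have hu₀ := norm_pos_iff.mpr hu
  have hs' : |(s : ℝ)| = 1 := by exact_mod_cast hs
  rw [← map_smul, ← map_smul, ← map_add] at hfst hsnd hnorm
  refine (hbad _ hfst hsnd).trans ?_
  gcongr
  · calc |linForm α β (s • w + m • u)| ≤ |linForm α β (s • w)| + |linForm α β (m • u)| := by
          rw [map_add]; exact abs_add_le _ _
      _ = |linForm α β w| + |(m : ℝ)| * |linForm α β u| := by
          rw [abs_linForm_zsmul, abs_linForm_zsmul, hs', one_mul]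
      _ ≤ _ := by
          gcongr
          rwa [div_add_one hu₀.ne', le_div_iff₀' hu₀]
  · rwa [le_div_iff₀' hu₀]

lemma PositivelyBad.le_of_norm_mul_norm_le (hbad : PositivelyBad α β t ε) (ht : 0 ≤ t)
    (ht₂ : t ≤ 2) (hu : planar u ≠ 0) (huv : ‖planar u‖ ≤ ‖planar v‖)
    (hdet : ‖planar u‖ * ‖planar v‖ ≤ |wedge (planar u) (planar v)|) :
    ε ≤ 160 * ‖crossTerm α β u v‖ * ‖planar v‖ ^ t / ‖planar u‖ := by
  have hu₀ := norm_pos_iff.mpr hu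
  have hv₀ := hu₀.trans_le huv
  have hv := norm_pos_iff.mp hv₀
  have hLu : |linForm α β u| ≤ 2 * ‖crossTerm α β u v‖ / ‖planar v‖ :=
    abs_linForm_le_of_norm_mul_norm_le hu hv hdet
  have hLv : |linForm α β v| ≤ 2 * ‖crossTerm α β u v‖ / ‖planar u‖ := by
    rw [crossTerm_anticomm, norm_neg]
    exact abs_linForm_le_of_norm_mul_norm_le hv hu (by rwa [mul_comm, wedge_anticomm, abs_neg])
  rcases lt_or_ge 0 ((planar u).1 * (planar u).2) with hpos | hsign
  · calc ε ≤ |linForm α β u| * ‖planar u‖ ^ t := hbad.le_of_mul_pos hpos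
      _ ≤ (2 * ‖crossTerm α β u v‖ / ‖planar u‖) * ‖planar v‖ ^ t := by
          gcongr; exact hLu.trans (by gcongr)
      _ ≤ (160 * ‖crossTerm α β u v‖ / ‖planar u‖) * ‖planar v‖ ^ t := by gcongr; norm_num
      _ = _ := by ring
  have hwedge : |wedge (planar u) (planar ((2 : ℤ) • v))| =
      2 * |wedge (planar u) (planar v)| := by
    rw [map_smul, wedge_zsmul_right, abs_mul]; norm_num
  have h := hbad.le_of_two_mul_sq_le ht hu hsign (w := (2 : ℤ) • v) (by rw [hwedge]; nlinarith)
  rw [hwedge, abs_linForm_zsmul, norm_planar_zsmul, Int.cast_ofNat, abs_two] at h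
  calc ε ≤ _ := h
    _ ≤ (2 * (2 * ‖crossTerm α β u v‖ / ‖planar u‖) + (2 * ‖planar v‖ / ‖planar u‖ +
          ‖planar v‖ / ‖planar u‖) * (2 * ‖crossTerm α β u v‖ / ‖planar v‖)) *
          (4 * ‖planar v‖) ^ t := by
        gcongr
        · rwa [one_le_div hu₀]
        · rw [div_le_iff₀ hu₀]
          linarith [abs_wedge_le (planar u) (planar v)]
    _ = 10 * ‖crossTerm α β u v‖ / ‖planar u‖ * (4 ^ t * ‖planar v‖ ^ t) := by
        rw [Real.mul_rpow (by norm_num) hv₀.le]; field_simp; ring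
    _ ≤ 10 * ‖crossTerm α β u v‖ / ‖planar u‖ * (4 ^ (2 : ℝ) * ‖planar v‖ ^ t) := by
        gcongr; norm_num
    _ = _ := by norm_num; ring

lemma PositivelyBad.mul_norm_planar_le (hbad : PositivelyBad α β t ε) (ht : 0 ≤ t)
    (ht₂ : t ≤ 2) (hu : planar u ≠ 0) (huv : ‖planar u‖ ≤ ‖planar v‖)
    (hdet : ‖planar u‖ * ‖planar v‖ ≤ |wedge (planar u) (planar v)|) :
    ε * ‖planar u‖ ≤ 160 * ‖crossTerm α β u v‖ * |wedge (planar u) (planar v)| ^ t := by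
  have hu₁ := one_le_norm_planar hu
  calc ε * ‖planar u‖ ≤ 160 * ‖crossTerm α β u v‖ * ‖planar v‖ ^ t :=
        (le_div_iff₀ (norm_pos_iff.mpr hu)).mp (hbad.le_of_norm_mul_norm_le ht ht₂ hu huv hdet)
    _ ≤ 160 * ‖crossTerm α β u v‖ * |wedge (planar u) (planar v)| ^ t := by
        gcongr
        exact (le_mul_of_one_le_left (norm_nonneg _) hu₁).trans hdet

end PositivelyBad

section GoldenRatio

lemma one_lt_tau : 1 < tau := Real.one_lt_goldenRatio

lemma tau_lt_two : tau < 2 := Real.goldenRatio_lt_two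

lemma tau_sub_one_mul_tau : (tau - 1) * tau = 1 := by
  have h : tau ^ 2 = tau + 1 := Real.goldenRatio_sq
  linear_combination h

lemma rpow_tau_sub_one_rpow_tau {x : ℝ} (hx : 0 ≤ x) : (x ^ (tau - 1)) ^ tau = x := by
  rw [← Real.rpow_mul hx, tau_sub_one_mul_tau, Real.rpow_one]

lemma rpow_tau_rpow_tau_sub_one {x : ℝ} (hx : 0 ≤ x) : (x ^ tau) ^ (tau - 1) = x := by
  rw [← Real.rpow_mul hx, mul_comm, tau_sub_one_mul_tau, Real.rpow_one]

end GoldenRatio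

section Growth

lemma eventually_mul_rpow_le (C : ℝ) {s : ℝ} (hs : s < 1) :
    ∀ᶠ K in Filter.atTop, C * K ^ s ≤ K := by
  filter_upwards [(tendsto_rpow_atTop (sub_pos.mpr hs)).eventually_ge_atTop C,
    Filter.eventually_gt_atTop 0] with K hC hK
  calc C * K ^ s ≤ K ^ (1 - s) * K ^ s := by gcongr
    _ = K := by rw [← Real.rpow_add hK, sub_add_cancel, Real.rpow_one]

lemma eventually_div_lt (C : ℝ) {ε : ℝ} (hε : 0 < ε) : ∀ᶠ K in Filter.atTop, C / K < ε :=
  (Filter.tendsto_id.const_div_atTop C).eventually_lt_const hε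

end Growth

section Contradiction

variable {α β t ε : ℝ} {u w : ℤ × ℤ × ℤ}

lemma PositivelyBad.exists_norm_planar_le_rpow (hbad : PositivelyBad α β t ε) (hε : 0 < ε)
    (ht : 0 ≤ t) (ht₂ : t ≤ 2) (hw : IsBestApprox α β w) (hlarge : 4 < ‖planar w‖) :
    ∃ u, ∃ R > 0, planar u ≠ 0 ∧ |linForm α β u| ≤ 8 / ‖planar w‖ ∧
      |linForm α β u| ≤ 16 / R ^ 2 ∧ ‖planar u‖ ≤ 1280 / ε * R ^ (t - 1) := by
  obtain ⟨z, hz, hdet, hcross⟩ := hw.exists_wedge_ne_zero hlarge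
  obtain ⟨u, v, hdet', hcross', huv, hvle, hred⟩ := exists_reduced_pair α β w z
  have : 0 < ‖planar w‖ := by linarith
  have hu : planar u ≠ 0 := fun hu ↦ hdet <| by simpa [hu, wedge] using hdet'.symm
  have hu₁ := one_le_norm_planar hu
  have hu₀ := norm_pos_iff.mpr hu
  have hv₀ : 0 < ‖planar v‖ := hu₀.trans_le huv
  have : ‖planar v‖ ≤ 2 * ‖planar w‖ := by linarith
  have hval : |linForm α β u| ≤ 8 / (‖planar w‖ * ‖planar v‖) :=
    calc |linForm α β u| ≤ 2 * ‖crossTerm α β u v‖ / ‖planar v‖ :=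
          abs_linForm_le_of_norm_mul_norm_le hu (norm_pos_iff.mp hv₀) hred
      _ ≤ 2 * (4 / ‖planar w‖) / ‖planar v‖ := by rw [hcross']; gcongr
      _ = 8 / (‖planar w‖ * ‖planar v‖) := by field_simp; norm_num
  refine ⟨u, ‖planar v‖, hv₀, hu, ?_, ?_, ?_⟩
  · exact hval.trans (by gcongr; nlinarith)
  · exact hval.trans (by rw [div_le_div_iff₀ (by positivity) (by positivity)]; nlinarith)
  · have h : ε ≤ _ := hbad.le_of_norm_mul_norm_le ht ht₂ hu huv hred
    rw [le_div_iff₀ hu₀, ← le_div_iff₀' hε] at h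
    calc ‖planar u‖ ≤ 160 * ‖crossTerm α β u v‖ * ‖planar v‖ ^ t / ε := h
      _ ≤ 160 * (4 / (‖planar v‖ / 2)) * ‖planar v‖ ^ t / ε := by
          rw [hcross']
          gcongr
          exact hcross.trans (by gcongr; linarith)
      _ = 1280 / ε * ‖planar v‖ ^ (t - 1) := by
          rw [Real.rpow_sub_one hv₀.ne']; field_simp; norm_num

lemma PositivelyBad.frequently_exists_isBestApprox (hbad : PositivelyBad α β tau ε) (hε : 0 < ε)
    (h : ZLinIndep α β) : ∃ᶠ K in Filter.atTop, ∃ u, IsBestApprox α β u ∧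
      ‖planar u‖ = 1280 / ε * K ^ (tau - 1) ∧ |linForm α β u| ≤ 16 / K ^ 2 := by
  refine Filter.frequently_atTop.mpr fun K₀ ↦ ?_
  have hτ := one_lt_tau
  set C := 1280 / ε
  have hC₀ : 0 < C := by positivity
  obtain ⟨δ, hδ, hle⟩ := h.exists_pos_le_abs_linForm (C * (max K₀ 1) ^ (tau - 1))
  obtain ⟨w, hw, hwlarge⟩ := h.exists_lt_norm_planar (max 4 (8 / δ))
  obtain ⟨hw₄, hwδ⟩ := max_lt_iff.mp hwlarge
  obtain ⟨v, R, hR, hv, hv₁, hv₂, hvle⟩ :=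
    hbad.exists_norm_planar_le_rpow hε (by linarith) tau_lt_two.le hw hw₄
  obtain ⟨u, hu, huv, hval⟩ := exists_isBestApprox_le α β hv
  have hlarge : C * (max K₀ 1) ^ (tau - 1) < ‖planar u‖ := by
    refine lt_of_not_ge fun hN ↦ (hle u hu.1 hN).not_gt ((hval.trans hv₁).trans_lt ?_)
    exact (div_lt_comm₀ hδ (by linarith)).mp hwδ
  refine ⟨(‖planar u‖ / C) ^ tau, ?_, u, hu, ?_, ?_⟩
  · calc K₀ ≤ max K₀ 1 := le_max_left ..
      _ = ((max K₀ 1) ^ (tau - 1)) ^ tau := (rpow_tau_sub_one_rpow_tau (by positivity)).symm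
      _ ≤ (‖planar u‖ / C) ^ tau := by
          gcongr
          exact (le_div_iff₀' hC₀).mpr hlarge.le
  · rw [rpow_tau_rpow_tau_sub_one (by positivity), mul_div_cancel₀ _ hC₀.ne']
  · have hKR : (‖planar u‖ / C) ^ tau ≤ R :=
      calc (‖planar u‖ / C) ^ tau ≤ (R ^ (tau - 1)) ^ tau := by
            gcongr
            exact (div_le_iff₀' hC₀).mpr (huv.trans hvle)
        _ = R := rpow_tau_sub_one_rpow_tau hR.le
    have := norm_pos_iff.mpr hu.1
    exact (hval.trans hv₂).trans (by gcongr)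

variable {c K : ℝ}

lemma PositivelyBad.abs_wedge_lt (hbad : PositivelyBad α β t ε) (ht : 0 ≤ t) (ht₂ : t ≤ 2)
    (hu : planar u ≠ 0) (hsign : (planar u).1 * (planar u).2 ≤ 0) (huK : ‖planar u‖ ≤ K)
    (hLu : |linForm α β u| ≤ 16 / K ^ 2) (hwK : ‖planar w‖ ≤ K)
    (hLw : |linForm α β w| ≤ 2 / (‖planar u‖ * K)) (hlarge : 136 * K ^ (t - 1) < ε * ‖planar u‖) :
    |wedge (planar u) (planar w)| < 2 * ‖planar u‖ ^ 2 := by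
  by_contra! hdet
  have hu₀ := norm_pos_iff.mpr hu
  have hK := hu₀.trans_le huK
  rw [← div_lt_iff₀ hu₀] at hlarge
  refine hlarge.not_ge ?_
  calc ε ≤ (|linForm α β w| + (‖planar w‖ / ‖planar u‖ + 1) * |linForm α β u|) *
        (|wedge (planar u) (planar w)| / ‖planar u‖) ^ t :=
      hbad.le_of_two_mul_sq_le ht hu hsign hdet
    _ ≤ (2 / (‖planar u‖ * K) + (K / ‖planar u‖ + K / ‖planar u‖) * (16 / K ^ 2)) *
        (2 * K) ^ t := by
      gcongr
      · rwa [one_le_div hu₀]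
      · rw [div_le_iff₀ hu₀]
        calc |wedge (planar u) (planar w)| ≤ 2 * ‖planar u‖ * ‖planar w‖ := abs_wedge_le ..
          _ ≤ 2 * ‖planar u‖ * K := by gcongr
          _ = 2 * K * ‖planar u‖ := by ring
    _ = 34 / (‖planar u‖ * K) * (2 ^ t * K ^ t) := by
      rw [Real.mul_rpow (by norm_num) hK.le]; field_simp; norm_num
    _ ≤ 34 / (‖planar u‖ * K) * (2 ^ (2 : ℝ) * K ^ t) := by gcongr; norm_num
    _ = 136 * K ^ (t - 1) / ‖planar u‖ := by
      rw [Real.rpow_sub_one hK.ne', Real.rpow_two]; field_simp; norm_num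

lemma PositivelyBad.mul_abs_wedge_le (hbad : PositivelyBad α β t ε) (ht : 0 ≤ t) (ht₂ : t ≤ 2)
    (hu : planar u ≠ 0) (hsign : (planar u).1 * (planar u).2 ≤ 0) (huK : ‖planar u‖ ≤ K)
    (hLu : |linForm α β u| ≤ 16 / K ^ 2) (hwu : ‖planar w‖ ≤ 3 * ‖planar u‖)
    (hLw : |linForm α β w| ≤ 2 / (‖planar u‖ * K)) (hdet : wedge (planar u) (planar w) ≠ 0)
    (hlt : |wedge (planar u) (planar w)| < 2 * ‖planar u‖ ^ 2) :
    ε * |wedge (planar u) (planar w)| ≤ 4224 * ‖planar u‖ ^ t * ‖planar u‖ / K := by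
  have hu₀ := norm_pos_iff.mpr hu
  have hK := hu₀.trans_le huK
  set A := ‖planar u‖
  set D := |wedge (planar u) (planar w)|
  have hD : 0 < D := abs_pos.mpr hdet
  obtain ⟨k, hk, hkD, hkD'⟩ : ∃ k : ℤ, 1 ≤ (k : ℝ) ∧ 2 * A ^ 2 ≤ k * D ∧ k * D ≤ 4 * A ^ 2 := by
    refine ⟨⌈2 * A ^ 2 / D⌉, ?_, (div_le_iff₀ hD).mp (Int.le_ceil _), ?_⟩
    · exact ((one_le_div hD).mpr hlt.le).trans (Int.le_ceil _)
    · have := mul_le_mul_of_nonneg_right (Int.ceil_lt_add_one (2 * A ^ 2 / D)).le hD.le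
      rw [add_mul, div_mul_cancel₀ _ hD.ne'] at this
      linarith
  have hwedge : |wedge (planar u) (planar (k • w))| = k * D := by
    rw [map_smul, wedge_zsmul_right, abs_mul, abs_of_pos (by linarith)]
  have h := hbad.le_of_two_mul_sq_le ht hu hsign (hkD.trans_eq hwedge.symm)
  rw [hwedge, abs_linForm_zsmul, norm_planar_zsmul, abs_of_pos (by linarith)] at h
  have hε : ε ≤ k * 66 / (A * K) * (16 * A ^ t) :=
    calc ε ≤ _ := h
      _ ≤ (k * (2 / (A * K)) + (k * (3 * A) / A + k) * (16 / (A * K))) * (4 * A) ^ t := by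
        gcongr
        · exact hLu.trans (by rw [sq]; gcongr)
        · rw [div_le_iff₀ hu₀]; linarith
      _ = k * 66 / (A * K) * (4 ^ t * A ^ t) := by
        rw [Real.mul_rpow (by norm_num) hu₀.le]; field_simp; norm_num
      _ ≤ k * 66 / (A * K) * (4 ^ (2 : ℝ) * A ^ t) := by gcongr; norm_num
      _ = k * 66 / (A * K) * (16 * A ^ t) := by norm_num
  calc ε * D ≤ k * 66 / (A * K) * (16 * A ^ t) * D := by gcongr
    _ = 1056 * A ^ t / (A * K) * (k * D) := by ring
    _ ≤ 1056 * A ^ t / (A * K) * (4 * A ^ 2) := by gcongr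
    _ = 4224 * A ^ t * A / K := by field_simp; norm_num

lemma PositivelyBad.exists_abs_linForm_le (hbad : PositivelyBad α β t ε) (hε : 0 < ε)
    (ht : 0 ≤ t) (ht₂ : t ≤ 2) (hu : IsBestApprox α β u)
    (hsign : (planar u).1 * (planar u).2 ≤ 0) (hK : 18 < K) (huK : ‖planar u‖ ≤ K)
    (hLu : |linForm α β u| ≤ 16 / K ^ 2) (hlarge : 136 * K ^ (t - 1) < ε * ‖planar u‖)
    (hc : ‖planar u‖ ^ t = c * K) : ∃ v, planar v ≠ 0 ∧ |linForm α β v| ≤ 36 / K ∧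
      ‖planar v‖ ≤ 2880 / ε * (4224 / ε * c) ^ t * c := by
  have hK₀ : 0 < K := by linarith
  have hu₀ := norm_pos_iff.mpr hu.1
  have hc₀ : 0 < c := pos_of_mul_pos_left (hc ▸ Real.rpow_pos_of_pos hu₀ t) hK₀.le
  obtain ⟨w, hwK, hLw, hdet, hcross, hwu⟩ := hu.exists_wedge_ne_zero_of_le hK huK hLu
  have hlt := hbad.abs_wedge_lt ht ht₂ hu.1 hsign huK hLu hwK hLw hlarge
  have hwu' : ‖planar w‖ ≤ 3 * ‖planar u‖ := le_of_mul_le_mul_left (by linarith) hu₀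
  have hD := hbad.mul_abs_wedge_le ht ht₂ hu.1 hsign huK hLu hwu' hLw hdet hlt
  obtain ⟨v, v', hdet', hcross', hvv', -, hred⟩ := exists_reduced_pair α β u w
  have hv : planar v ≠ 0 := fun hv ↦ hdet <| by simpa [hv, wedge] using hdet'.symm
  have hv₁ := one_le_norm_planar hv
  have hv₀ := norm_pos_iff.mpr hv
  have hv₀' := hv₀.trans_le hvv'
  refine ⟨v, hv, ?_, ?_⟩
  · calc |linForm α β v| ≤ 2 * ‖crossTerm α β v v'‖ / ‖planar v'‖ :=
          abs_linForm_le_of_norm_mul_norm_le hv (norm_pos_iff.mp hv₀') hred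
      _ ≤ 2 * (18 / K) / 1 := by rw [hcross']; gcongr; linarith
      _ = 36 / K := by ring
  have hdet_le : |wedge (planar v) (planar v')| ≤ 4224 / ε * c * ‖planar u‖ := by
    refine le_of_mul_le_mul_left ?_ hε
    rw [hdet']
    refine hD.trans_eq ?_
    rw [hc]
    field_simp
  have hle := hbad.mul_norm_planar_le ht ht₂ hv hvv' hred
  rw [← le_div_iff₀' hε, hcross'] at hle
  calc ‖planar v‖ ≤ 160 * (18 / K) * (4224 / ε * c * ‖planar u‖) ^ t / ε :=
        hle.trans (by gcongr)
    _ = 2880 / ε * (4224 / ε * c) ^ t * c := by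
        rw [Real.mul_rpow (by positivity) hu₀.le, hc]; field_simp; norm_num

theorem ZLinIndep.not_positivelyBad (h : ZLinIndep α β) (hε : 0 < ε) :
    ¬PositivelyBad α β tau ε := by
  intro hbad
  have hτ := one_lt_tau
  have hτ₂ := tau_lt_two
  set C := 1280 / ε with hC
  obtain ⟨δ, hδ, hle⟩ :=
    h.exists_pos_le_abs_linForm (2880 / ε * (4224 / ε * C ^ tau) ^ tau * C ^ tau)
  obtain ⟨K, ⟨u, hu, hA, hLu⟩, hK, huK, hKε, hKδ⟩ :=
    ((hbad.frequently_exists_isBestApprox hε h).and_eventually <|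
      (Filter.eventually_gt_atTop 18).and <|
        (eventually_mul_rpow_le C (by linarith : tau - 1 < 1)).and <|
          (eventually_div_lt (16 * C ^ tau) hε).and (eventually_div_lt 36 hδ)).exists
  rw [← hC] at hA
  have hK₀ : 0 < K := by linarith
  have hAτ : ‖planar u‖ ^ tau = C ^ tau * K := by
    rw [hA, Real.mul_rpow (by positivity) (by positivity), rpow_tau_sub_one_rpow_tau hK₀.le]
  have hsign : (planar u).1 * (planar u).2 ≤ 0 := by
    by_contra! hpos
    refine hKε.not_ge ?_
    calc ε ≤ |linForm α β u| * ‖planar u‖ ^ tau := hbad.le_of_mul_pos hpos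
      _ ≤ 16 / K ^ 2 * (C ^ tau * K) := by rw [hAτ]; gcongr
      _ = 16 * C ^ tau / K := by field_simp
  have hlarge : 136 * K ^ (tau - 1) < ε * ‖planar u‖ := by
    rw [hA, ← mul_assoc, hC, mul_div_cancel₀ _ hε.ne']
    gcongr
    norm_num
  obtain ⟨v, hv, hLv, hvle⟩ := hbad.exists_abs_linForm_le hε (by linarith) hτ₂.le hu hsign hK
    (hA.trans_le huK) hLu hlarge hAτ
  exact (hle v hv hvle).not_gt (hLv.trans_lt hKδ)

end Contradiction

lemma ZLinIndep.exists_pos_nint_mul_rpow_lt {α β ε : ℝ} (h : ZLinIndep α β) (hε : 0 < ε) :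
    ∃ x : ℤ × ℤ, (0 < x.1 ∧ 0 < x.2) ∧
      nint (α * x.1 + β * x.2) * ((max x.1 x.2 : ℤ) : ℝ) ^ tau < ε := by
  have hgood := h.not_positivelyBad hε
  simp only [PositivelyBad, not_forall, not_le] at hgood
  obtain ⟨u, h₁, h₂, hlt⟩ := hgood
  have hnorm : ‖planar u‖ = (max u.2.1 u.2.2 : ℤ) := by
    rw [norm_eq_max_abs, abs_of_pos h₁, abs_of_pos h₂, Int.cast_max, planar_apply]
  simp only [planar_apply, Int.cast_pos] at h₁ h₂
  refine ⟨u.2, ⟨h₁, h₂⟩, lt_of_le_of_lt ?_ hlt⟩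
  rw [hnorm]
  gcongr
  exact nint_le_abs_linForm α β u

/-- W.M. Schmidt's theorem (Theorem 1): if 1, α₁, α₂ are linearly independent over ℤ, then
there is a sequence of integer vectors with positive coordinates along which
‖α₁x₁ + α₂x₂‖ · (max{x₁,x₂})^τ → 0. -/
theorem schmidt_positive_approx (α₁ α₂ : ℝ) (h : ZLinIndep α₁ α₂) :
    ∃ x : ℕ → ℤ × ℤ,
      (∀ i, 0 < (x i).1 ∧ 0 < (x i).2) ∧
      Filter.Tendsto
        (fun i => nint (α₁ * (x i).1 + α₂ * (x i).2) *
          ((max (x i).1 (x i).2 : ℤ) : ℝ) ^ tau)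
        Filter.atTop (nhds 0) := by
  choose x hpos hlt using fun n : ℕ ↦
    h.exists_pos_nint_mul_rpow_lt (Nat.one_div_pos_of_nat (n := n))
  refine ⟨x, hpos, squeeze_zero (fun i ↦ ?_) (fun i ↦ (hlt i).le)
    tendsto_one_div_add_atTop_nhds_zero_nat⟩
  have hmax : (0 : ℝ) < (max (x i).1 (x i).2 : ℤ) := by exact_mod_cast lt_max_of_lt_left (hpos i).1
  exact mul_nonneg (abs_nonneg _) (by positivity)
end

section
/- Suppose the real numbers α₁, α₂ satisfy the following Diophantine condition: for some Γ ∈ (0,1) and γ ≥ 2 the inequality ‖α₁m₁ + α₂m₂‖ ≥ Γ / (max{|m₁|, |m₂|})^γ holds for all integer vectors (m₁, m₂) ∈ ℤ² \ {(0,0)}. Then there exist infinitely many integer two-dimensional vectors (x₁, x₂) with x₁ > 0, x₂ > 0 and ‖α₁x₁ + α₂x₂‖ · (max{x₁, x₂})^{g(γ)} ≤ C(Γ). -/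
/-- g(γ) = τ + (2τ − 2)/(τ²γ − 2) -/
noncomputable def gfun (γ : ℝ) : ℝ := tau + (2 * tau - 2) / (tau ^ 2 * γ - 2)

/-- C(Γ) = 2¹⁸ · Γ^{(τ − τ²)/(τ²γ − 2)} -/
noncomputable def Cconst (Γ γ : ℝ) : ℝ := 2 ^ 18 * Γ ^ ((tau - tau ^ 2) / (tau ^ 2 * γ - 2))

/-!
Write `ℓ(v) = v₀ + α₁ v₁ + α₂ v₂`. If there were only finitely many solutions, then for all large
`B` no `x ∈ ℤ³` with positive `x₁`, `x₂` and height at most `B` would satisfy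
`|ℓ(x)| * B ^ g ≤ C(Γ)`. In particular all late best approximations lie, up to sign, in the closed
fourth quadrant. If `u` lies there and `det(u, v) = u₁ v₂ - u₂ v₁` is nonzero, then some integer
combination of `u` and `v` has positive coefficients and height about `|u| + |det(u, v)| / |u|`; the
absence of positive solutions thus bounds `|det(u, v)|` in terms of `ℓ(u)`, `ℓ(v)` and the heights.

While the best approximations stay in one rational plane, the determinants of consecutive pairs, and
their minors with `ℓ`, are constant up to sign. These minors tend to `0`, so every rational plane is
eventually left. The determinant bound, applied to the first pair of a maximal coplanar stretch, to
its last pair, and to the last vector with a suitable lattice point outside the plane, yields three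
inequalities. Together with the Diophantine condition they are incompatible for `g = g(γ)`.
-/

namespace Schmidt

open Filter MeasureTheory

/-! ### Lattice points -/

section LatticePoints

theorem volume_forall_abs_mulVec_lt {ι : Type*} [Fintype ι] [DecidableEq ι] {A : Matrix ι ι ℝ}
    {c : ι → ℝ} (hc : ∀ i, 0 ≤ c i) (hA : A.det ≠ 0) :
    volume {x : ι → ℝ | ∀ i, |A.mulVec x i| < c i} =
      ENNReal.ofReal (|A.det|⁻¹ * (2 ^ Fintype.card ι * ∏ i, c i)) := by
  have h_preimage : {x : ι → ℝ | ∀ i, |A.mulVec x i| < c i} =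
      Matrix.toLin' A ⁻¹' Set.univ.pi fun i => Set.Ioo (-c i) (c i) := by
    ext x
    simp [abs_lt]
  rw [h_preimage, Measure.addHaar_preimage_linearMap _ (by simpa using hA), LinearMap.det_toLin',
    Real.volume_pi_Ioo, ← ENNReal.ofReal_prod_of_nonneg fun i _ => by linarith [hc i],
    ← ENNReal.ofReal_mul (abs_nonneg _), abs_inv]
  simp only [sub_neg_eq_add, ← two_mul, Finset.prod_mul_distrib, Finset.prod_const,
    Finset.card_univ]

theorem exists_int_ne_zero_abs_mulVec_lt {ι : Type*} [Fintype ι] [DecidableEq ι]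
    {A : Matrix ι ι ℝ} {c : ι → ℝ} (hc : ∀ i, 0 ≤ c i) (hA : A.det ≠ 0)
    (h : |A.det| < ∏ i, c i) :
    ∃ x : ι → ℤ, x ≠ 0 ∧ ∀ i, |A.mulVec (fun j => (x j : ℝ)) i| < c i := by
  set s := {x : ι → ℝ | ∀ i, |A.mulVec x i| < c i}
  let b := Pi.basisFun ℝ ι
  have h_symm : ∀ x ∈ s, -x ∈ s := fun x hx i => by simpa [Matrix.mulVec_neg] using hx i
  have h_convex : Convex ℝ s := by
    have : s = ⋂ i, Matrix.toLin' A ⁻¹' {y | y i ∈ Set.Ioo (-c i) (c i)} := by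
      ext x
      simp [s, abs_lt]
    rw [this]
    exact convex_iInter fun i =>
      ((convex_Ioo _ _).linear_preimage (LinearMap.proj i)).linear_preimage _
  have h_volume : volume (ZSpan.fundamentalDomain b) * 2 ^ Module.finrank ℝ (ι → ℝ) < volume s := by
    rw [volume_forall_abs_mulVec_lt hc hA, ZSpan.fundamentalDomain_pi_basisFun,
      Real.volume_pi_Ico, Module.finrank_pi, ← ENNReal.ofReal_ofNat 2,
      ← ENNReal.ofReal_pow (by norm_num)]
    simp only [sub_zero, ENNReal.ofReal_one, Finset.prod_const_one, one_mul]
    have := abs_pos.mpr hA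
    rw [ENNReal.ofReal_lt_ofReal_iff_of_nonneg (by positivity), lt_inv_mul_iff₀ this, mul_comm]
    gcongr
  have : Countable (Submodule.span ℤ (Set.range b)).toAddSubgroup :=
    inferInstanceAs (Countable (Submodule.span ℤ (Set.range b)))
  obtain ⟨x, hx_ne, hx⟩ := exists_ne_zero_mem_lattice_of_measure_mul_two_pow_lt_measure
    (ZSpan.isAddFundamentalDomain' b volume) h_symm h_convex h_volume
  choose y hy using (b.mem_span_iff_repr_mem ℤ _).mp x.2
  have hy_eq : (fun j => (y j : ℝ)) = x := funext fun j => by simpa [b] using hy j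
  refine ⟨y, ?_, fun i => hy_eq ▸ hx i⟩
  rintro rfl
  exact hx_ne (Subtype.ext (hy_eq.symm.trans (funext fun _ => Int.cast_zero)))

theorem exists_mul_mem_Ioc {d : ℤ} (hd : d ≠ 0) (c : ℤ) : ∃ k : ℤ, k * d ∈ Set.Ioc c (c + |d|) := by
  obtain ⟨k, hk, -⟩ := existsUnique_add_zsmul_mem_Ioc (abs_pos.mpr hd) 0 c
  refine ⟨k * d.sign, ?_⟩
  rwa [mul_assoc, Int.sign_mul_self_eq_abs, ← zero_add (k * |d|)]

theorem exists_combination_pos_of_neg_le {u₁ u₂ v₁ v₂ : ℤ} (hu₁ : 0 < u₁) (hu₂ : u₂ ≤ 0)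
    (h : -u₂ ≤ u₁) (hd : u₁ * v₂ - u₂ * v₁ ≠ 0) :
    ∃ a b : ℤ, 0 < a * u₁ + b * v₁ ∧ 0 < a * u₂ + b * v₂ ∧
      u₁ * (a * u₁ + b * v₁) ≤ u₁ ^ 2 + |u₁ * v₂ - u₂ * v₁| ∧
      u₁ * (a * u₂ + b * v₂) ≤ u₁ ^ 2 + |u₁ * v₂ - u₂ * v₁| ∧
      |b| * |u₁ * v₂ - u₂ * v₁| ≤ u₁ ^ 2 + |u₁ * v₂ - u₂ * v₁| := by
  obtain ⟨b, hb_lt, hb_le⟩ := exists_mul_mem_Ioc hd (u₁ ^ 2)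
  obtain ⟨a, ha_lt, ha_le⟩ := exists_mul_mem_Ioc hu₁.ne' (-(b * v₁))
  rw [abs_of_pos hu₁] at ha_le
  have h_second : u₁ * (a * u₂ + b * v₂) =
      b * (u₁ * v₂ - u₂ * v₁) + (a * u₁ + b * v₁) * u₂ := by ring
  have h_pos : 0 < u₁ * (a * u₂ + b * v₂) := by rw [h_second]; nlinarith
  refine ⟨a, b, by linarith, pos_of_mul_pos_right h_pos hu₁.le, ?_, ?_, ?_⟩
  · nlinarith [abs_nonneg (u₁ * v₂ - u₂ * v₁)]
  · rw [h_second]; nlinarith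
  · rwa [← abs_mul, abs_of_pos ((pow_pos hu₁ 2).trans hb_lt)]

theorem exists_combination_pos {u₁ u₂ v₁ v₂ : ℤ} (hu₁ : 0 ≤ u₁) (hu₂ : u₂ ≤ 0)
    (hd : u₁ * v₂ - u₂ * v₁ ≠ 0) :
    ∃ a b : ℤ, 0 < a * u₁ + b * v₁ ∧ 0 < a * u₂ + b * v₂ ∧
      max |u₁| |u₂| * (a * u₁ + b * v₁) ≤ max |u₁| |u₂| ^ 2 + |u₁ * v₂ - u₂ * v₁| ∧
      max |u₁| |u₂| * (a * u₂ + b * v₂) ≤ max |u₁| |u₂| ^ 2 + |u₁ * v₂ - u₂ * v₁| ∧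
      |b| * |u₁ * v₂ - u₂ * v₁| ≤ max |u₁| |u₂| ^ 2 + |u₁ * v₂ - u₂ * v₁| := by
  have hu_ne : u₁ ≠ 0 ∨ u₂ ≠ 0 := by
    by_contra! h
    simp [h.1, h.2] at hd
  rw [abs_of_nonneg hu₁, abs_of_nonpos hu₂]
  rcases le_total (-u₂) u₁ with h | h
  · rw [max_eq_left h]
    exact exists_combination_pos_of_neg_le (by omega) hu₂ h hd
  · rw [max_eq_right h]
    -- The reflection `(x₁, x₂) ↦ (-x₂, -x₁)` of `u` and of `-v` exchanges the two cases.
    have h_det : -u₂ * v₁ - -u₁ * v₂ = u₁ * v₂ - u₂ * v₁ := by ring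
    obtain ⟨a, b, h₂, h₁, hM₂, hM₁, hb⟩ := exists_combination_pos_of_neg_le (u₁ := -u₂)
      (u₂ := -u₁) (v₁ := v₂) (v₂ := v₁) (by omega) (by omega) (by omega) (h_det ▸ hd)
    rw [h_det] at hM₂ hM₁ hb
    exact ⟨-a, b, by linarith, by linarith, by linarith, by linarith, hb⟩

end LatticePoints

/-! ### The linear form, heights and determinants -/

/-- The linear form `v₀ + α₁ v₁ + α₂ v₂` on `ℤ³`. Minimising its absolute value over the constant
term `v₀` gives the distance of `α₁ v₁ + α₂ v₂` to the nearest integer. -/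
noncomputable def linForm (α₁ α₂ : ℝ) : (Fin 3 → ℤ) →+ ℝ where
  toFun v := v 0 + α₁ * v 1 + α₂ * v 2
  map_zero' := by simp
  map_add' v w := by simp only [Pi.add_apply]; push_cast; ring

/-- The height of `v ∈ ℤ³`: the maximum norm of the coefficient vector `(v₁, v₂)`, which ignores
the constant term `v₀`. -/
noncomputable def height (v : Fin 3 → ℤ) : ℝ := max |(v 1 : ℝ)| |(v 2 : ℝ)|

/-- The vector of `ℤ³` with coefficients `m₁`, `m₂` whose constant term minimises the absolute
value of the linear form. -/
noncomputable def optimalLift (α₁ α₂ : ℝ) (m₁ m₂ : ℤ) : Fin 3 → ℤ :=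
  ![-round (α₁ * m₁ + α₂ * m₂), m₁, m₂]

/-- The determinant of the coefficient vectors `(a₁, a₂)` and `(b₁, b₂)`. -/
def planarDet (a b : Fin 3 → ℤ) : ℤ := a 1 * b 2 - a 2 * b 1

/-- The determinant of three vectors of `ℤ³`. -/
def tripleDet (a b c : Fin 3 → ℤ) : ℤ := (Matrix.of ![a, b, c]).det

/-- The minors of the `2 × 3` matrix with rows `(ℓ(a), a₁, a₂)` and `(ℓ(b), b₁, b₂)`, where `ℓ` is
the linear form; apart from `planarDet a b`, there is one for each index `i ≠ 0`. -/
noncomputable def formMinor (α₁ α₂ : ℝ) (i : Fin 3) (a b : Fin 3 → ℤ) : ℝ :=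
  linForm α₁ α₂ a * b i - linForm α₁ α₂ b * a i

/-- The coefficient vector of `v` lies in the closed fourth quadrant. A best approximation that
is not mixed, up to sign, already has positive coefficients. -/
def IsMixed (v : Fin 3 → ℤ) : Prop := 0 ≤ v 1 ∧ v 2 ≤ 0

section Basic

variable {α₁ α₂ : ℝ} {a b c v w : Fin 3 → ℤ} {i k : Fin 3}

local notation "ℓ" => linForm α₁ α₂

theorem linForm_apply (v : Fin 3 → ℤ) : ℓ v = v 0 + α₁ * v 1 + α₂ * v 2 := rfl

theorem nint_le_abs_linForm (v : Fin 3 → ℤ) : nint (α₁ * v 1 + α₂ * v 2) ≤ |ℓ v| := by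
  have h := round_le (α₁ * v 1 + α₂ * v 2) (-v 0)
  rwa [Int.cast_neg, sub_neg_eq_add, add_comm _ (v 0 : ℝ), ← add_assoc] at h

theorem abs_linForm_optimalLift (α₁ α₂ : ℝ) (m₁ m₂ : ℤ) :
    |linForm α₁ α₂ (optimalLift α₁ α₂ m₁ m₂)| = nint (α₁ * m₁ + α₂ * m₂) := by
  simp only [linForm_apply, nint, optimalLift, Matrix.cons_val]
  congr 1
  push_cast
  ring

theorem height_nonneg (v : Fin 3 → ℤ) : 0 ≤ height v := le_max_of_le_left (abs_nonneg _)

theorem eq_one_or_eq_two_of_ne_zero (hi : i ≠ 0) : i = 1 ∨ i = 2 := by omega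

theorem abs_apply_le_height (v : Fin 3 → ℤ) (hi : i ≠ 0) : |(v i : ℝ)| ≤ height v := by
  rcases eq_one_or_eq_two_of_ne_zero hi with rfl | rfl
  exacts [le_max_left _ _, le_max_right _ _]

theorem exists_abs_apply_eq_height (v : Fin 3 → ℤ) : ∃ i ≠ 0, |(v i : ℝ)| = height v := by
  rcases max_choice |(v 1 : ℝ)| |(v 2 : ℝ)| with h | h
  exacts [⟨1, by decide, h.symm⟩, ⟨2, by decide, h.symm⟩]

theorem height_neg (v : Fin 3 → ℤ) : height (-v) = height v := by
  simp [height]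

theorem height_eq_intCast (v : Fin 3 → ℤ) : height v = (max |v 1| |v 2| : ℤ) := by
  simp [height]

theorem height_optimalLift (α₁ α₂ : ℝ) (m₁ m₂ : ℤ) :
    height (optimalLift α₁ α₂ m₁ m₂) = (max |m₁| |m₂| : ℤ) := by
  simp [height_eq_intCast, optimalLift]

theorem exists_height_eq_natCast (v : Fin 3 → ℤ) : ∃ n : ℕ, height v = n := by
  lift max |v 1| |v 2| to ℕ using le_max_of_le_left (abs_nonneg _) with n h
  exact ⟨n, by rw [height_eq_intCast, ← h, Int.cast_natCast]⟩

theorem height_add_one_le (h : height v < height w) : height v + 1 ≤ height w := by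
  simp only [height_eq_intCast] at h ⊢
  exact_mod_cast h

theorem one_le_height (h : 0 < height v) : 1 ≤ height v := by
  simp only [height_eq_intCast] at h ⊢
  exact_mod_cast h

theorem apply_eq_zero_of_height_eq_zero (h : height v = 0) (hi : i ≠ 0) : v i = 0 := by
  have := h ▸ abs_apply_le_height v hi
  exact_mod_cast abs_nonpos_iff.mp this

theorem height_pos_of_abs_linForm_lt_one (hv : v ≠ 0) (h : |ℓ v| < 1) : 0 < height v := by
  refine (height_nonneg v).lt_of_ne' fun h_height => hv ?_
  have h₁ := apply_eq_zero_of_height_eq_zero h_height (i := 1) (by decide)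
  have h₂ := apply_eq_zero_of_height_eq_zero h_height (i := 2) (by decide)
  have h₀ : v 0 = 0 := by
    rw [linForm_apply, h₁, h₂, Int.cast_zero, mul_zero, mul_zero, add_zero, add_zero] at h
    exact Int.abs_lt_one_iff.mp (mod_cast h)
  ext i
  fin_cases i
  exacts [h₀, h₁, h₂]

theorem abs_mul_sub_mul_le (α β : ℝ) (a b : Fin 3 → ℤ) (hi : i ≠ 0) (hk : k ≠ 0) :
    |α * b i - β * a k| ≤ |α| * height b + |β| * height a := by
  refine (abs_sub _ _).trans ?_
  rw [abs_mul, abs_mul]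
  gcongr
  exacts [abs_apply_le_height b hi, abs_apply_le_height a hk]

theorem abs_planarDet_le (a b : Fin 3 → ℤ) : |(planarDet a b : ℝ)| ≤ 2 * height a * height b := by
  have h := abs_mul_sub_mul_le (a 1) (a 2) b b (i := 2) (k := 1) (by decide) (by decide)
  have h₁ := abs_apply_le_height a (i := 1) (by decide)
  have h₂ := abs_apply_le_height a (i := 2) (by decide)
  rw [planarDet]
  push_cast
  nlinarith [mul_le_mul_of_nonneg_right h₁ (height_nonneg b),
    mul_le_mul_of_nonneg_right h₂ (height_nonneg b)]

theorem IsMixed.abs_planarDet_le_mul (ha : IsMixed a) (hb : IsMixed b) :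
    |(planarDet a b : ℝ)| ≤ height a * height b := by
  have h : |planarDet a b| ≤ max |a 1| |a 2| * max |b 1| |b 2| := by
    obtain ⟨⟨ha₁, ha₂⟩, hb₁, hb₂⟩ := ha, hb
    have := neg_nonneg.mpr ha₂
    have h₂ := neg_nonneg.mpr hb₂
    rw [abs_of_nonneg ha₁, abs_of_nonpos ha₂, abs_of_nonneg hb₁, abs_of_nonpos hb₂, planarDet]
    have h_fst : -(a 2) * b 1 ≤ max (a 1) (-a 2) * max (b 1) (-b 2) := by
      gcongr
      exacts [le_max_right _ _, le_max_left _ _]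
    have h_snd : a 1 * -b 2 ≤ max (a 1) (-a 2) * max (b 1) (-b 2) := by
      gcongr
      exacts [le_max_left _ _, le_max_right _ _]
    rw [abs_le]
    constructor <;> nlinarith
  rw [height_eq_intCast, height_eq_intCast]
  exact_mod_cast h

theorem abs_mul_sub_mul_le_abs_planarDet (a b : Fin 3 → ℤ) (hi : i ≠ 0) (hk : k ≠ 0) :
    |(a k * b i - a i * b k : ℝ)| ≤ |(planarDet a b : ℝ)| := by
  rw [planarDet]
  push_cast
  rcases eq_one_or_eq_two_of_ne_zero hi with rfl | rfl <;>
    rcases eq_one_or_eq_two_of_ne_zero hk with rfl | rfl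
  · simp [mul_comm]
  · rw [← abs_neg, neg_sub]
  · rfl
  · simp [mul_comm]

theorem tripleDet_eq (a b c : Fin 3 → ℤ) :
    (tripleDet a b c : ℝ) = ℓ a * planarDet b c - ℓ b * planarDet a c + ℓ c * planarDet a b := by
  simp only [tripleDet, Matrix.det_fin_three, planarDet, linForm_apply, Matrix.of_apply,
    Matrix.cons_val]
  push_cast
  ring

theorem one_le_abs_linForm_mul_add (h : tripleDet a b c ≠ 0) :
    1 ≤ |ℓ a| * |(planarDet b c : ℝ)| + |ℓ b| * |(planarDet a c : ℝ)| +
      |ℓ c| * |(planarDet a b : ℝ)| := by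
  have h_one : (1 : ℝ) ≤ |(tripleDet a b c : ℝ)| := mod_cast Int.one_le_abs h
  rw [tripleDet_eq (α₁ := α₁) (α₂ := α₂)] at h_one
  refine h_one.trans ((abs_add_le _ _).trans ?_)
  rw [← abs_mul, ← abs_mul, ← abs_mul]
  gcongr
  exact abs_sub _ _

end Basic

/-! ### Positive points near a plane -/

/-- No `x ∈ ℤ³` with positive coefficients and height at most `B` satisfies `|ℓ(x)| * B ^ g ≤ K`:
the form of the negation of the theorem that the proof contradicts. -/
def NoPositiveApprox (α₁ α₂ g K B : ℝ) : Prop :=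
  ∀ x : Fin 3 → ℤ, 0 < x 1 → 0 < x 2 → height x ≤ B → K < |linForm α₁ α₂ x| * B ^ g

section PositivePoints

variable {α₁ α₂ g K B X W : ℝ} {u v : Fin 3 → ℤ}

local notation "ℓ" => linForm α₁ α₂

theorem height_pos_of_planarDet_ne_zero (hd : planarDet u v ≠ 0) : 0 < height u := by
  refine (height_nonneg u).lt_of_ne' fun h => hd ?_
  simp [planarDet, apply_eq_zero_of_height_eq_zero h]

theorem IsMixed.exists_pos_combination (hu : IsMixed u) (hd : planarDet u v ≠ 0) :
    ∃ a b : ℤ, 0 < (a • u + b • v) 1 ∧ 0 < (a • u + b • v) 2 ∧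
      height u * height (a • u + b • v) ≤ height u ^ 2 + |(planarDet u v : ℝ)| ∧
      |(b : ℝ)| * |(planarDet u v : ℝ)| ≤ height u ^ 2 + |(planarDet u v : ℝ)| := by
  obtain ⟨a, b, h₁, h₂, hM₁, hM₂, hb⟩ := exists_combination_pos hu.1 hu.2 hd
  refine ⟨a, b, by simpa using h₁, by simpa using h₂, ?_, ?_⟩
  · simp only [height_eq_intCast, Pi.add_apply, Pi.smul_apply, smul_eq_mul, abs_of_pos h₁,
      abs_of_pos h₂]
    have := (mul_max_of_nonneg _ _ (le_max_of_le_left (abs_nonneg (u 1)))).trans_le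
      (max_le hM₁ hM₂)
    exact_mod_cast this
  · rw [height_eq_intCast]
    exact_mod_cast hb

theorem IsMixed.exists_pos_abs_linForm_le (hu : IsMixed u) (hd : planarDet u v ≠ 0) :
    ∃ x : Fin 3 → ℤ, 0 < x 1 ∧ 0 < x 2 ∧
      height x ≤ height u + |(planarDet u v : ℝ)| / height u ∧
      |ℓ x| * |(planarDet u v : ℝ)| ≤ (height u + |(planarDet u v : ℝ)| / height u) *
        (2 * height v * |ℓ u| + height u * |ℓ v|) := by
  obtain ⟨a, b, h₁, h₂, hx, hb⟩ := hu.exists_pos_combination hd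
  have hu_pos := height_pos_of_planarDet_ne_zero hd
  set x := a • u + b • v with hx_def
  set D := |(planarDet u v : ℝ)|
  set X := height u + D / height u with hX_def
  have hX : height u * X = height u ^ 2 + D := by rw [hX_def]; field_simp
  have hxX : height x ≤ X := le_of_mul_le_mul_left (hx.trans_eq hX.symm) hu_pos
  have ha : |(a : ℝ)| * D ≤ 2 * X * height v := by
    have : (a : ℝ) * planarDet u v = planarDet x v := by
      simp only [hx_def, planarDet, Pi.add_apply, Pi.smul_apply, smul_eq_mul]
      push_cast
      ring
    rw [← abs_mul, this]
    refine (abs_planarDet_le x v).trans ?_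
    gcongr
    exact height_nonneg v
  refine ⟨x, h₁, h₂, hxX, ?_⟩
  have h_form : ℓ x = a * ℓ u + b * ℓ v := by
    rw [hx_def, map_add, map_zsmul, map_zsmul, zsmul_eq_mul, zsmul_eq_mul]
  calc |ℓ x| * D ≤ (|(a : ℝ)| * |ℓ u| + |(b : ℝ)| * |ℓ v|) * D := by
        rw [h_form, ← abs_mul (a : ℝ), ← abs_mul (b : ℝ)]
        gcongr ?_ * _
        exact abs_add_le _ _
    _ = (|(a : ℝ)| * D) * |ℓ u| + (|(b : ℝ)| * D) * |ℓ v| := by ring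
    _ ≤ (2 * X * height v) * |ℓ u| + (height u * X) * |ℓ v| := by
        rw [hX]
        gcongr ?_ * _ + ?_ * _
    _ = X * (2 * height v * |ℓ u| + height u * |ℓ v|) := by ring

theorem NoPositiveApprox.mul_abs_planarDet_lt (h : NoPositiveApprox α₁ α₂ g K B)
    (hu : IsMixed u) (hd : planarDet u v ≠ 0)
    (hX : height u + |(planarDet u v : ℝ)| / height u ≤ X) (hXB : X ≤ B)
    (hW : 2 * height v * |ℓ u| + height u * |ℓ v| ≤ W) :
    K * |(planarDet u v : ℝ)| < X * W * B ^ g := by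
  obtain ⟨x, h₁, h₂, hx, hx_form⟩ := hu.exists_pos_abs_linForm_le (α₁ := α₁) (α₂ := α₂) hd
  have : 0 < |(planarDet u v : ℝ)| := abs_pos.mpr (Int.cast_ne_zero.mpr hd)
  have hX_nonneg : 0 ≤ X := (height_nonneg x).trans (hx.trans hX)
  have hv := height_nonneg v
  have hu := height_nonneg u
  calc K * |(planarDet u v : ℝ)| < |ℓ x| * B ^ g * |(planarDet u v : ℝ)| := by
        gcongr
        exact h x h₁ h₂ (hx.trans (hX.trans hXB))
    _ = |ℓ x| * |(planarDet u v : ℝ)| * B ^ g := by ring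
    _ ≤ X * W * B ^ g := by
        have := Real.rpow_nonneg (hX_nonneg.trans hXB) g
        gcongr ?_ * _
        exact hx_form.trans (by gcongr)

theorem rpow_le_sq {x g : ℝ} (hx : 1 ≤ x) (hg : g ≤ 2) : x ^ g ≤ x ^ 2 := by
  simpa using Real.rpow_le_rpow_of_exponent_le hx hg

theorem NoPositiveApprox.mul_abs_planarDet_lt_of_isMixed
    (h : NoPositiveApprox α₁ α₂ g K (2 * height v)) (hg : g ≤ 2) (hu : IsMixed u) (hv : IsMixed v)
    (hd : planarDet u v ≠ 0) (h_height : height u ≤ height v) (h_form : |ℓ v| ≤ |ℓ u|) :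
    K * |(planarDet u v : ℝ)| < 24 * (|ℓ u| * height v ^ 2 * height v ^ g) := by
  have hu_pos := height_pos_of_planarDet_ne_zero hd
  have hv_pos := hu_pos.trans_le h_height
  have hX : height u + |(planarDet u v : ℝ)| / height u ≤ 2 * height v := by
    have := (div_le_iff₀' hu_pos).mpr (hu.abs_planarDet_le_mul hv)
    linarith
  have hW : 2 * height v * |ℓ u| + height u * |ℓ v| ≤ 3 * height v * |ℓ u| := by
    have := mul_le_mul h_height h_form (abs_nonneg _) hv_pos.le
    linarith
  calc K * |(planarDet u v : ℝ)|
      < 2 * height v * (3 * height v * |ℓ u|) * (2 * height v) ^ g :=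
        h.mul_abs_planarDet_lt hu hd hX le_rfl hW
    _ = 6 * 2 ^ g * (|ℓ u| * height v ^ 2 * height v ^ g) := by
        rw [Real.mul_rpow two_pos.le hv_pos.le]
        ring
    _ ≤ 24 * (|ℓ u| * height v ^ 2 * height v ^ g) := by
        have := rpow_le_sq one_le_two hg
        gcongr
        linarith

theorem NoPositiveApprox.mul_abs_planarDet_lt_pow
    (h : NoPositiveApprox α₁ α₂ g K (2 * height v)) (hg : g ≤ 2) (hu : IsMixed u) (hv : IsMixed v)
    (hd : planarDet u v ≠ 0) (h_height : height u ≤ height v) (h_form : |ℓ v| ≤ |ℓ u|) :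
    K * |(planarDet u v : ℝ)| < 24 * (|ℓ u| * height v ^ 4) := by
  refine (h.mul_abs_planarDet_lt_of_isMixed hg hu hv hd h_height h_form).trans_le ?_
  have hv_one := one_le_height ((height_pos_of_planarDet_ne_zero hd).trans_le h_height)
  calc 24 * (|ℓ u| * height v ^ 2 * height v ^ g)
      ≤ 24 * (|ℓ u| * height v ^ 2 * height v ^ 2) := by
        gcongr
        exact rpow_le_sq hv_one hg
    _ = 24 * (|ℓ u| * height v ^ 4) := by ring

end PositivePoints

/-! ### Best approximations -/

/-- `v` minimises the linear form among the vectors of positive height at most its own. -/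
def IsBestApprox (α₁ α₂ : ℝ) (v : Fin 3 → ℤ) : Prop :=
  0 < height v ∧ ∀ x, 0 < height x → height x ≤ height v → |linForm α₁ α₂ v| ≤ |linForm α₁ α₂ x|

/-- `a` is a best approximation and `b` is a vector of least height at which the linear form is
smaller than at `a`, such as the next best approximation. -/
structure IsConsecutiveBest (α₁ α₂ : ℝ) (a b : Fin 3 → ℤ) : Prop where
  height_pos : 0 < height a
  height_lt : height a < height b
  abs_lt : |linForm α₁ α₂ b| < |linForm α₁ α₂ a|
  abs_le_of_height_lt :
    ∀ x, 0 < height x → height x < height b → |linForm α₁ α₂ a| ≤ |linForm α₁ α₂ x|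

section BestApprox

variable {α₁ α₂ : ℝ} {a b v : Fin 3 → ℤ} {i : Fin 3}

local notation "ℓ" => linForm α₁ α₂

theorem exists_height_lt_abs_linForm_lt (α₁ α₂ : ℝ) {ε r : ℝ} (hε : 0 ≤ ε) (hε_one : ε ≤ 1)
    (hr : 0 ≤ r) (h : 1 < ε * r ^ 2) :
    ∃ x, 0 < height x ∧ height x < r ∧ |linForm α₁ α₂ x| < ε := by
  have h_det : (!![1, α₁, α₂; 0, 1, 0; 0, 0, 1] : Matrix (Fin 3) (Fin 3) ℝ).det = 1 := by
    simp [Matrix.det_fin_three]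
  obtain ⟨x, hx_ne, hx⟩ := exists_int_ne_zero_abs_mulVec_lt (c := ![ε, r, r])
    (Fin.forall_fin_succ.mpr ⟨hε, by simp [hr]⟩) (h_det.trans_ne one_ne_zero)
    (by simpa [h_det, Fin.prod_univ_three, mul_assoc, ← sq] using h)
  simp only [Fin.forall_fin_succ, Matrix.mulVec, dotProduct, Fin.sum_univ_three] at hx
  have hx_form : |linForm α₁ α₂ x| < ε := by simpa [linForm_apply] using hx.1
  refine ⟨x, height_pos_of_abs_linForm_lt_one hx_ne (hx_form.trans_le hε_one), ?_, hx_form⟩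
  exact max_lt (by simpa using hx.2.1) (by simpa using hx.2.2)

theorem exists_abs_linForm_le_of_height_le (α₁ α₂ : ℝ) {R : ℕ} (hR : 1 ≤ R) :
    ∃ v, 0 < height v ∧ height v ≤ R ∧
      ∀ x, 0 < height x → height x ≤ R → |linForm α₁ α₂ v| ≤ |linForm α₁ α₂ x| := by
  let S := (Finset.Icc (-(R : ℤ)) R ×ˢ Finset.Icc (-(R : ℤ)) R).erase 0
  have mem_S : ∀ m : ℤ × ℤ, m ∈ S ↔ 0 < max |m.1| |m.2| ∧ max |m.1| |m.2| ≤ R := by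
    rintro ⟨m₁, m₂⟩
    simp only [S, Finset.mem_erase, Finset.mem_product, Finset.mem_Icc, ne_eq, Prod.mk_eq_zero,
      lt_max_iff, max_le_iff, abs_pos, abs_le]
    tauto
  have hS : S.Nonempty := ⟨(1, 0), (mem_S _).mpr (by simpa using hR)⟩
  obtain ⟨m, hm, h_min⟩ := S.exists_min_image (fun m => nint (α₁ * m.1 + α₂ * m.2)) hS
  have hm_height := (mem_S m).mp hm
  refine ⟨optimalLift α₁ α₂ m.1 m.2, ?_, ?_, fun x hx_pos hx_le => ?_⟩
  · rw [height_optimalLift]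
    exact_mod_cast hm_height.1
  · rw [height_optimalLift]
    exact_mod_cast hm_height.2
  · rw [height_eq_intCast] at hx_pos hx_le
    rw [abs_linForm_optimalLift]
    exact (h_min (x 1, x 2) ((mem_S _).mpr ⟨mod_cast hx_pos, mod_cast hx_le⟩)).trans
      (nint_le_abs_linForm x)

theorem IsBestApprox.abs_linForm_le_one (h : IsBestApprox α₁ α₂ v) : |ℓ v| ≤ 1 := by
  have h_height : height (optimalLift α₁ α₂ (v 1) (v 2)) = height v := by
    rw [height_optimalLift, height_eq_intCast]
  have h_lift := h.2 _ (h.1.trans_eq h_height.symm) h_height.le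
  rw [abs_linForm_optimalLift] at h_lift
  exact h_lift.trans ((abs_sub_round _).trans (by norm_num))

theorem IsBestApprox.exists_isConsecutiveBest (hℓ : ∀ x, 0 < height x → ℓ x ≠ 0)
    (hv : IsBestApprox α₁ α₂ v) : ∃ w, IsBestApprox α₁ α₂ w ∧ IsConsecutiveBest α₁ α₂ v w := by
  have hv_form : 0 < |ℓ v| := abs_pos.mpr (hℓ v hv.1)
  have h_exists : ∃ n : ℕ, ∃ x, 0 < height x ∧ height x = n ∧ |ℓ x| < |ℓ v| := by
    have h_volume : 1 < |ℓ v| * (2 / |ℓ v|) ^ 2 := by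
      have : |ℓ v| * (2 / |ℓ v|) ^ 2 = 4 / |ℓ v| := by field
      rw [this, lt_div_iff₀ hv_form]
      linarith [hv.abs_linForm_le_one]
    obtain ⟨x, hx_pos, -, hx⟩ := exists_height_lt_abs_linForm_lt α₁ α₂ hv_form.le
      hv.abs_linForm_le_one (by positivity) h_volume
    obtain ⟨n, hn⟩ := exists_height_eq_natCast x
    exact ⟨n, x, hx_pos, hn, hx⟩
  classical
  obtain ⟨x, hx_pos, hx_height, hx⟩ := Nat.find_spec h_exists
  set n := Nat.find h_exists
  have h_least : ∀ y, 0 < height y → |ℓ y| < |ℓ v| → n ≤ height y := by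
    intro y hy_pos hy
    obtain ⟨k, hk⟩ := exists_height_eq_natCast y
    rw [hk]
    exact_mod_cast Nat.find_min' h_exists ⟨y, hy_pos, hk, hy⟩
  obtain ⟨w, hw_pos, hw_le, hw_min⟩ := exists_abs_linForm_le_of_height_le α₁ α₂ (R := n)
    (by exact_mod_cast (one_le_height hx_pos).trans_eq hx_height)
  have hwv : |ℓ w| < |ℓ v| := (hw_min x hx_pos hx_height.le).trans_lt hx
  refine ⟨w, ⟨hw_pos, fun y hy_pos hy => hw_min y hy_pos (hy.trans hw_le)⟩,
    hv.1, ?_, hwv, fun y hy_pos hy => ?_⟩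
  · by_contra! h
    exact hwv.not_ge (hv.2 w hw_pos h)
  · by_contra! h
    exact (hy.trans_le hw_le).not_ge (h_least y hy_pos h)

namespace IsConsecutiveBest

theorem isBestApprox (h : IsConsecutiveBest α₁ α₂ a b) : IsBestApprox α₁ α₂ a :=
  ⟨h.height_pos, fun x hx_pos hx => h.abs_le_of_height_lt x hx_pos (hx.trans_lt h.height_lt)⟩

theorem abs_linForm_pos (h : IsConsecutiveBest α₁ α₂ a b) : 0 < |ℓ a| :=
  (abs_nonneg _).trans_lt h.abs_lt

theorem height_pos_right (h : IsConsecutiveBest α₁ α₂ a b) : 0 < height b :=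
  h.height_pos.trans h.height_lt

theorem abs_linForm_mul_sq_height_le_one (h : IsConsecutiveBest α₁ α₂ a b) :
    |ℓ a| * height b ^ 2 ≤ 1 := by
  by_contra! h_volume
  obtain ⟨x, hx_pos, hx_height, hx⟩ := exists_height_lt_abs_linForm_lt α₁ α₂ (abs_nonneg (ℓ a))
    h.isBestApprox.abs_linForm_le_one (height_nonneg b) h_volume
  exact hx.not_ge (h.abs_le_of_height_lt x hx_pos hx_height)

theorem abs_formMinor_le (h : IsConsecutiveBest α₁ α₂ a b) (hi : i ≠ 0) :
    |formMinor α₁ α₂ i a b| ≤ 2 * (|ℓ a| * height b) := by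
  refine (abs_mul_sub_mul_le (ℓ a) (ℓ b) a b hi hi).trans ?_
  have := mul_le_mul h.abs_lt.le h.height_lt.le (height_nonneg a) (abs_nonneg _)
  linarith

theorem exists_formMinor_ne_zero (h : IsConsecutiveBest α₁ α₂ a b) :
    ∃ i ≠ 0, formMinor α₁ α₂ i a b ≠ 0 := by
  obtain ⟨i, hi, hb⟩ := exists_abs_apply_eq_height b
  refine ⟨i, hi, fun h_zero => ?_⟩
  have h_eq : |ℓ a| * height b = |ℓ b| * |(a i : ℝ)| := by
    rw [← hb, ← abs_mul, ← abs_mul, sub_eq_zero.mp h_zero]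
  have h_lt : |ℓ b| * |(a i : ℝ)| < |ℓ a| * height b :=
    mul_lt_mul'' h.abs_lt ((abs_apply_le_height a hi).trans_lt h.height_lt) (abs_nonneg _)
      (abs_nonneg _)
  exact h_lt.ne' h_eq

theorem planarDet_ne_zero (h : IsConsecutiveBest α₁ α₂ a b) (hb : 2 < height b) :
    planarDet a b ≠ 0 := by
  intro h_zero
  have h_small : 2 * (|ℓ a| * height b) < 1 := by
    nlinarith [h.abs_linForm_mul_sq_height_le_one, mul_pos h.abs_linForm_pos h.height_pos_right]
  obtain ⟨i, hi, h_ne⟩ := h.exists_formMinor_ne_zero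
  have h_int : formMinor α₁ α₂ i a b = (a 0 * b i - b 0 * a i : ℤ) := by
    have h_real : (a 1 * b 2 - a 2 * b 1 : ℝ) = 0 := mod_cast h_zero
    simp only [formMinor, linForm_apply]
    push_cast
    rcases eq_one_or_eq_two_of_ne_zero hi with rfl | rfl
    · linear_combination -α₂ * h_real
    · linear_combination α₁ * h_real
  have h_abs := (h.abs_formMinor_le hi).trans_lt h_small
  rw [h_int] at h_abs h_ne
  exact h_ne (mod_cast Int.abs_lt_one_iff.mp (mod_cast h_abs))

end IsConsecutiveBest

end BestApprox

/-! ### Coplanar best approximations -/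

section Coplanar

variable {α₁ α₂ : ℝ} {a b c x y : Fin 3 → ℤ} {i : Fin 3}

local notation "ℓ" => linForm α₁ α₂

theorem planarDet_zsmul_eq (h : tripleDet a b y = 0) :
    planarDet a b • y = planarDet y b • a + planarDet a y • b := by
  simp only [tripleDet, Matrix.det_fin_three, Matrix.of_apply, Matrix.cons_val] at h
  ext i
  fin_cases i <;> simp [planarDet] <;> linarith

theorem tripleDet_rotate (a b c : Fin 3 → ℤ) : tripleDet b c a = tripleDet a b c := by
  simp only [tripleDet, Matrix.det_fin_three, Matrix.of_apply, Matrix.cons_val]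
  ring

theorem exists_two_mul_abs_sub_mul_le {d : ℤ} (hd : d ≠ 0) (n : ℤ) :
    ∃ k : ℤ, 2 * |n - k * d| ≤ |d| := by
  obtain ⟨k, hk⟩ := exists_mul_mem_Ioc (mul_ne_zero two_ne_zero hd) (2 * n - |d|)
  rw [abs_mul, abs_two, Set.mem_Ioc] at hk
  refine ⟨k, ?_⟩
  rw [← abs_two, ← abs_mul, abs_le]
  constructor <;> linarith

namespace IsConsecutiveBest

theorem eq_zero_of_tripleDet_eq_zero (h : IsConsecutiveBest α₁ α₂ a b) (hd : planarDet a b ≠ 0)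
    (hy : tripleDet a b y = 0) (hyb : 2 * |planarDet y b| ≤ |planarDet a b|)
    (hay : 2 * |planarDet a y| ≤ |planarDet a b|) : y = 0 := by
  have h_eq := planarDet_zsmul_eq hy
  set D := planarDet a b
  have hD : 0 < |(D : ℝ)| := mod_cast abs_pos.mpr hd
  have hyb' : 2 * |(planarDet y b : ℝ)| ≤ |(D : ℝ)| := mod_cast hyb
  have hay' : 2 * |(planarDet a y : ℝ)| ≤ |(D : ℝ)| := mod_cast hay
  have h_form : |ℓ y| < |ℓ a| := by
    have h_le : |(D : ℝ)| * |ℓ y| ≤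
        |(planarDet y b : ℝ)| * |ℓ a| + |(planarDet a y : ℝ)| * |ℓ b| := by
      rw [← abs_mul, ← zsmul_eq_mul, ← map_zsmul, h_eq, map_add, map_zsmul, map_zsmul,
        zsmul_eq_mul, zsmul_eq_mul, ← abs_mul, ← abs_mul]
      exact abs_add_le _ _
    nlinarith [h.abs_lt, abs_nonneg (ℓ a), abs_nonneg (ℓ b)]
  have h_height : height y < height b := by
    obtain ⟨i, hi, hyi⟩ := exists_abs_apply_eq_height y
    have h_le : |(D : ℝ)| * height y ≤
        |(planarDet y b : ℝ)| * height a + |(planarDet a y : ℝ)| * height b := by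
      have h_apply : (D * y i : ℝ) = planarDet y b * a i + planarDet a y * b i :=
        mod_cast congrFun h_eq i
      rw [← hyi, ← abs_mul, h_apply]
      refine (abs_add_le _ _).trans ?_
      rw [abs_mul, abs_mul]
      gcongr
      exacts [abs_apply_le_height a hi, abs_apply_le_height b hi]
    nlinarith [h.height_lt, h.height_pos]
  by_contra hy_ne
  have hy_pos := height_pos_of_abs_linForm_lt_one hy_ne
    (h_form.trans_le h.isBestApprox.abs_linForm_le_one)
  exact h_form.not_ge (h.abs_le_of_height_lt y hy_pos h_height)

theorem exists_eq_zsmul_add_zsmul (h : IsConsecutiveBest α₁ α₂ a b) (hd : planarDet a b ≠ 0)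
    (hx : tripleDet a b x = 0) : ∃ p q : ℤ, x = p • a + q • b := by
  obtain ⟨p, hp⟩ := exists_two_mul_abs_sub_mul_le hd (planarDet x b)
  obtain ⟨q, hq⟩ := exists_two_mul_abs_sub_mul_le hd (planarDet a x)
  refine ⟨p, q, sub_eq_zero.mp (h.eq_zero_of_tripleDet_eq_zero hd ?_ ?_ ?_)⟩
  · rw [← hx]
    simp only [tripleDet, Matrix.det_fin_three, Matrix.of_apply, Matrix.cons_val, Pi.sub_apply,
      Pi.add_apply, Pi.smul_apply, smul_eq_mul]
    ring
  · convert hp using 3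
    simp only [planarDet, Pi.sub_apply, Pi.add_apply, Pi.smul_apply, smul_eq_mul]
    ring
  · convert hq using 3
    simp only [planarDet, Pi.sub_apply, Pi.add_apply, Pi.smul_apply, smul_eq_mul]
    ring

theorem exists_eq_zsmul_add_zsmul_of_abs_eq_one (hab : IsConsecutiveBest α₁ α₂ a b)
    (hbc : IsConsecutiveBest α₁ α₂ b c) (hb : 2 < height b) (h : tripleDet a b c = 0) :
    ∃ p q : ℤ, |p| = 1 ∧ c = p • a + q • b := by
  have hd_ab := hab.planarDet_ne_zero hb
  have hd_bc := hbc.planarDet_ne_zero (hb.trans hbc.height_lt)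
  obtain ⟨p, q, hc⟩ := hab.exists_eq_zsmul_add_zsmul hd_ab h
  obtain ⟨r, s, ha⟩ := hbc.exists_eq_zsmul_add_zsmul hd_bc ((tripleDet_rotate a b c).trans h)
  refine ⟨p, q, ?_, hc⟩
  have hp : planarDet b c = -p * planarDet a b := by
    simp only [hc, planarDet, Pi.add_apply, Pi.smul_apply, smul_eq_mul]
    ring
  have hs : planarDet a b = -s * planarDet b c := by
    simp only [ha, planarDet, Pi.add_apply, Pi.smul_apply, smul_eq_mul]
    ring
  have h_unit : p * s = 1 := mul_right_cancel₀ hd_ab (by linear_combination -hs + s * hp)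
  exact Int.isUnit_iff_abs_eq.mp (IsUnit.of_mul_eq_one s h_unit)

theorem abs_planarDet_eq (hab : IsConsecutiveBest α₁ α₂ a b) (hbc : IsConsecutiveBest α₁ α₂ b c)
    (hb : 2 < height b) (h : tripleDet a b c = 0) : |planarDet b c| = |planarDet a b| := by
  obtain ⟨p, q, hp, rfl⟩ := hab.exists_eq_zsmul_add_zsmul_of_abs_eq_one hbc hb h
  have : planarDet b (p • a + q • b) = -p * planarDet a b := by
    simp only [planarDet, Pi.add_apply, Pi.smul_apply, smul_eq_mul]
    ring
  rw [this, abs_mul, abs_neg, hp, one_mul]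

theorem abs_formMinor_eq (hab : IsConsecutiveBest α₁ α₂ a b) (hbc : IsConsecutiveBest α₁ α₂ b c)
    (hb : 2 < height b) (h : tripleDet a b c = 0) (i : Fin 3) :
    |formMinor α₁ α₂ i b c| = |formMinor α₁ α₂ i a b| := by
  obtain ⟨p, q, hp, rfl⟩ := hab.exists_eq_zsmul_add_zsmul_of_abs_eq_one hbc hb h
  have : formMinor α₁ α₂ i b (p • a + q • b) = -p * formMinor α₁ α₂ i a b := by
    simp only [formMinor, map_add, map_zsmul, Pi.add_apply, Pi.smul_apply, smul_eq_mul]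
    push_cast [zsmul_eq_mul]
    ring
  rw [this, abs_mul, abs_neg, ← Int.cast_abs, hp, Int.cast_one, one_mul]

end IsConsecutiveBest

variable {m : ℕ → Fin 3 → ℤ}

theorem eq_of_tripleDet_eq_zero {β : Type*} {F : (Fin 3 → ℤ) → (Fin 3 → ℤ) → β}
    (hF : ∀ k, tripleDet (m k) (m (k + 1)) (m (k + 2)) = 0 →
      F (m (k + 1)) (m (k + 2)) = F (m k) (m (k + 1)))
    {k : ℕ} (h : ∀ j < k, tripleDet (m j) (m (j + 1)) (m (j + 2)) = 0) :
    F (m k) (m (k + 1)) = F (m 0) (m 1) := by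
  induction k with
  | zero => rfl
  | succ k ih =>
    exact (hF k (h k k.lt_succ_self)).trans (ih fun j hj => h j (hj.trans k.lt_succ_self))

theorem tendsto_height_atTop (h : ∀ k, height (m k) < height (m (k + 1))) :
    Tendsto (fun k => height (m k)) atTop atTop := by
  refine tendsto_atTop_mono (fun k => ?_) tendsto_natCast_atTop_atTop
  induction k with
  | zero => simpa using height_nonneg (m 0)
  | succ k ih =>
    push_cast
    linarith [height_add_one_le (h k)]

theorem tendsto_formMinor (h : ∀ k, IsConsecutiveBest α₁ α₂ (m k) (m (k + 1))) (hi : i ≠ 0) :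
    Tendsto (fun k => formMinor α₁ α₂ i (m k) (m (k + 1))) atTop (nhds 0) := by
  have h_height := (tendsto_height_atTop fun k => (h k).height_lt).comp (tendsto_add_atTop_nat 1)
  refine squeeze_zero_norm (fun k => ?_) (h_height.const_div_atTop 2)
  refine ((h k).abs_formMinor_le hi).trans ?_
  have := (h k).height_pos_right
  rw [Function.comp_apply, le_div_iff₀ this]
  linarith [(h k).abs_linForm_mul_sq_height_le_one]

theorem exists_tripleDet_ne_zero (h : ∀ k, IsConsecutiveBest α₁ α₂ (m k) (m (k + 1)))
    (h_height : ∀ k, 2 < height (m k)) : ∃ k, tripleDet (m k) (m (k + 1)) (m (k + 2)) ≠ 0 := by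
  by_contra! h_zero
  obtain ⟨i, hi, h_ne⟩ := (h 0).exists_formMinor_ne_zero
  have h_const : ∀ k, |formMinor α₁ α₂ i (m k) (m (k + 1))| = |formMinor α₁ α₂ i (m 0) (m 1)| :=
    fun k => eq_of_tripleDet_eq_zero (F := fun a b => |formMinor α₁ α₂ i a b|)
      (fun k hk => (h k).abs_formMinor_eq (h (k + 1)) (h_height _) hk i) fun j _ => h_zero j
  have h_tendsto := (tendsto_formMinor h hi).abs
  simp only [h_const, abs_zero, tendsto_const_nhds_iff] at h_tendsto
  exact h_ne (abs_eq_zero.mp h_tendsto)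

end Coplanar

/-! ### Mixed best approximations -/

section Mixed

variable {α₁ α₂ B₀ K g : ℝ} {a b c u v w : Fin 3 → ℤ} {i : Fin 3}

local notation "ℓ" => linForm α₁ α₂

theorem IsMixed.mul_apply_nonneg (ha : IsMixed a) (hb : IsMixed b) (hi : i ≠ 0) :
    (0 : ℝ) ≤ a i * b i := by
  rcases eq_one_or_eq_two_of_ne_zero hi with rfl | rfl
  · exact_mod_cast mul_nonneg ha.1 hb.1
  · exact_mod_cast mul_nonneg_of_nonpos_of_nonpos ha.2 hb.2

theorem abs_le_abs_sub_of_mul_nonpos {s t : ℝ} (h : s * t ≤ 0) : |s| ≤ |s - t| :=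
  sq_le_sq.mp (by nlinarith [sq_nonneg t])

theorem abs_sub_eq_abs_abs_sub_abs_of_mul_nonneg {s t : ℝ} (h : 0 ≤ s * t) :
    |s - t| = |(|s| - |t|)| := by
  rw [← sq_eq_sq_iff_abs_eq_abs, sub_sq, sub_sq, sq_abs, sq_abs, mul_assoc, mul_assoc, ← abs_mul,
    abs_of_nonneg h]

namespace IsConsecutiveBest

theorem height_le_height_sub (h : IsConsecutiveBest α₁ α₂ a b) (hℓ : 0 < ℓ a * ℓ b) :
    height b ≤ height (b - a) := by
  have h_form : |ℓ (b - a)| < |ℓ a| := by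
    rw [map_sub, abs_sub_comm, abs_sub_eq_abs_abs_sub_abs_of_mul_nonneg hℓ.le,
      abs_of_pos (sub_pos.mpr h.abs_lt), sub_lt_self_iff, abs_pos]
    exact right_ne_zero_of_mul hℓ.ne'
  have h_ne : b - a ≠ 0 := sub_ne_zero.mpr fun h_eq => h.height_lt.ne (congrArg height h_eq.symm)
  have h_pos := height_pos_of_abs_linForm_lt_one h_ne
    (h_form.trans_le h.isBestApprox.abs_linForm_le_one)
  by_contra! h_lt
  exact h_form.not_ge (h.abs_le_of_height_lt _ h_pos h_lt)

theorem exists_mul_height_le_abs_formMinor (h : IsConsecutiveBest α₁ α₂ a b) (ha : IsMixed a)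
    (hb : IsMixed b) : ∃ i ≠ 0, |ℓ a| * height b ≤ |formMinor α₁ α₂ i a b| := by
  rcases le_or_gt (ℓ a * ℓ b) 0 with hℓ | hℓ
  · obtain ⟨i, hi, hbi⟩ := exists_abs_apply_eq_height b
    refine ⟨i, hi, ?_⟩
    rw [← hbi, ← abs_mul, formMinor]
    apply abs_le_abs_sub_of_mul_nonpos
    linarith [mul_nonpos_of_nonpos_of_nonneg hℓ (ha.mul_apply_nonneg hb hi)]
  · obtain ⟨i, hi, hbai⟩ := exists_abs_apply_eq_height (b - a)
    refine ⟨i, hi, ?_⟩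
    have h_le := (h.height_le_height_sub hℓ).trans_eq hbai.symm
    rw [Pi.sub_apply, Int.cast_sub,
      abs_sub_eq_abs_abs_sub_abs_of_mul_nonneg (hb.mul_apply_nonneg ha hi)] at h_le
    have hbi := abs_apply_le_height b hi
    have hai := abs_apply_le_height a hi
    have h_lt := h.height_lt
    -- The entries of `b` and `a` have the same sign, so their difference is too small otherwise.
    have hai_zero : |(a i : ℝ)| = 0 := by
      rcases le_abs'.mp h_le with h_neg | h_pos
      · linarith [abs_nonneg (b i : ℝ)]
      · linarith [abs_nonneg (a i : ℝ)]
    rw [hai_zero, sub_zero, abs_abs] at h_le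
    rw [formMinor, abs_eq_zero.mp hai_zero, mul_zero, sub_zero, abs_mul]
    gcongr

end IsConsecutiveBest

theorem NoPositiveApprox.abs_linForm_mul_abs_planarDet_lt
    (h : NoPositiveApprox α₁ α₂ g K (2 * height v)) (hg : g ≤ 2) (hu : IsMixed u) (hv : IsMixed v)
    (h_height : height u ≤ height v) (h_form : |ℓ v| ≤ |ℓ u|)
    (hK : 72 * (|ℓ u| * |ℓ w| * height v ^ 4) ≤ K) :
    |ℓ w| * |(planarDet u v : ℝ)| < 1 / 3 := by
  by_contra! h_le
  have hd : planarDet u v ≠ 0 := by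
    rintro hd
    norm_num [hd] at h_le
  have hw : 0 < |ℓ w| := abs_pos.mpr fun hw => by norm_num [hw] at h_le
  have hK_nonneg : 0 ≤ K := le_trans (by positivity) hK
  have h_lt := mul_lt_mul_of_pos_left (h.mul_abs_planarDet_lt_pow hg hu hv hd h_height h_form) hw
  nlinarith [mul_le_mul_of_nonneg_left h_le hK_nonneg]

/-- Three consecutive best approximations that are mixed, linearly independent and of height at
least `B₀`. -/
structure IsMixedTriple (α₁ α₂ B₀ : ℝ) (a b c : Fin 3 → ℤ) : Prop where
  consecutive_left : IsConsecutiveBest α₁ α₂ a b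
  consecutive_right : IsConsecutiveBest α₁ α₂ b c
  mixed_left : IsMixed a
  mixed_mid : IsMixed b
  mixed_right : IsMixed c
  le_height : B₀ ≤ height a
  tripleDet_ne_zero : tripleDet a b c ≠ 0

namespace IsMixedTriple

theorem le_two_mul_height_mid (h : IsMixedTriple α₁ α₂ B₀ a b c) : B₀ ≤ 2 * height b := by
  linarith [h.le_height, h.consecutive_left.height_lt, height_nonneg b]

theorem le_two_mul_height_right (h : IsMixedTriple α₁ α₂ B₀ a b c) : B₀ ≤ 2 * height c := by
  linarith [h.le_two_mul_height_mid, h.consecutive_right.height_lt]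

theorem abs_linForm_left_mul_le (h : IsMixedTriple α₁ α₂ B₀ a b c) (hca : height c ≤ 3 * height a) :
    |ℓ a| * |ℓ b| * height c ^ 4 ≤ 9 := by
  have ha : |ℓ a| * height c ^ 2 ≤ 9 := by
    have : height c ^ 2 ≤ (3 * height b) ^ 2 := by
      have := height_nonneg c
      gcongr
      linarith [h.consecutive_left.height_lt]
    nlinarith [h.consecutive_left.abs_linForm_mul_sq_height_le_one, abs_nonneg (ℓ a)]
  calc |ℓ a| * |ℓ b| * height c ^ 4 = (|ℓ a| * height c ^ 2) * (|ℓ b| * height c ^ 2) := by ring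
    _ ≤ 9 * 1 := by
      gcongr
      exact h.consecutive_right.abs_linForm_mul_sq_height_le_one
    _ = 9 := by norm_num

theorem abs_linForm_mid_mul_abs_planarDet_lt (h : IsMixedTriple α₁ α₂ B₀ a b c)
    (hF : ∀ B ≥ B₀, NoPositiveApprox α₁ α₂ g K B) (hg : g ≤ 2) (hK : 648 ≤ K) :
    |ℓ b| * |(planarDet a c : ℝ)| < 1 / 3 := by
  have h_height := h.consecutive_left.height_lt.trans h.consecutive_right.height_lt
  have hc := h.consecutive_right.height_pos_right
  rcases le_or_gt (height c) (3 * height a) with hca | hca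
  · refine (hF _ h.le_two_mul_height_right).abs_linForm_mul_abs_planarDet_lt hg h.mixed_left
      h.mixed_right h_height.le (h.consecutive_right.abs_lt.trans h.consecutive_left.abs_lt).le ?_
    linarith [h.abs_linForm_left_mul_le hca]
  · have h_det := mul_le_mul_of_nonneg_left
      (h.mixed_left.abs_planarDet_le_mul h.mixed_right) (abs_nonneg (ℓ b))
    nlinarith [h.consecutive_right.abs_linForm_mul_sq_height_le_one,
      mul_pos h.consecutive_right.abs_linForm_pos hc]

theorem abs_linForm_right_mul_abs_planarDet_lt (h : IsMixedTriple α₁ α₂ B₀ a b c)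
    (hF : ∀ B ≥ B₀, NoPositiveApprox α₁ α₂ g K B) (hg : g ≤ 2) (hK : 72 ≤ K) :
    |ℓ c| * |(planarDet a b : ℝ)| < 1 / 3 := by
  refine (hF _ h.le_two_mul_height_mid).abs_linForm_mul_abs_planarDet_lt hg h.mixed_left
    h.mixed_mid h.consecutive_left.height_lt.le h.consecutive_left.abs_lt.le ?_
  have hc : |ℓ c| * height b ^ 2 ≤ 1 := by
    refine le_trans ?_ h.consecutive_right.abs_linForm_mul_sq_height_le_one
    have := height_nonneg b
    gcongr ?_ * ?_ ^ 2
    exacts [h.consecutive_right.abs_lt.le, h.consecutive_right.height_lt.le]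
  calc 72 * (|ℓ a| * |ℓ c| * height b ^ 4)
      = 72 * ((|ℓ a| * height b ^ 2) * (|ℓ c| * height b ^ 2)) := by ring
    _ ≤ 72 * (1 * 1) := by
      gcongr
      exact h.consecutive_left.abs_linForm_mul_sq_height_le_one
    _ ≤ K := by linarith

theorem one_third_lt (h : IsMixedTriple α₁ α₂ B₀ a b c)
    (hF : ∀ B ≥ B₀, NoPositiveApprox α₁ α₂ g K B) (hg : g ≤ 2) (hK : 648 ≤ K) :
    1 / 3 < |ℓ a| * |(planarDet b c : ℝ)| := by
  have h_one := one_le_abs_linForm_mul_add (α₁ := α₁) (α₂ := α₂) h.tripleDet_ne_zero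
  linarith [h.abs_linForm_mid_mul_abs_planarDet_lt hF hg hK,
    h.abs_linForm_right_mul_abs_planarDet_lt hF hg (by linarith)]

theorem sixty_mul_height_le (h : IsMixedTriple α₁ α₂ B₀ a b c)
    (hF : ∀ B ≥ B₀, NoPositiveApprox α₁ α₂ g K B) (hg : g ≤ 2) (hK : 2 ^ 18 ≤ K) :
    60 * height b ≤ height c := by
  by_contra! hcb
  refine (h.one_third_lt hF hg (by linarith)).not_gt <|
    (hF _ h.le_two_mul_height_right).abs_linForm_mul_abs_planarDet_lt hg h.mixed_mid
      h.mixed_right h.consecutive_right.height_lt.le h.consecutive_right.abs_lt.le ?_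
  have ha : |ℓ a| * height c ^ 2 ≤ 3600 := by
    have : height c ^ 2 ≤ (60 * height b) ^ 2 := by
      have := height_nonneg c
      gcongr
    nlinarith [h.consecutive_left.abs_linForm_mul_sq_height_le_one, abs_nonneg (ℓ a)]
  calc 72 * (|ℓ b| * |ℓ a| * height c ^ 4)
      = 72 * ((|ℓ b| * height c ^ 2) * (|ℓ a| * height c ^ 2)) := by ring
    _ ≤ 72 * (1 * 3600) := by
      gcongr
      exact h.consecutive_right.abs_linForm_mul_sq_height_le_one
    _ ≤ K := by linarith

theorem one_lt_three_mul (h : IsMixedTriple α₁ α₂ B₀ a b c)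
    (hF : ∀ B ≥ B₀, NoPositiveApprox α₁ α₂ g K B) (hg : g ≤ 2) (hK : 648 ≤ K) :
    1 < 3 * (|ℓ a| * height b) * height c := by
  have := mul_le_mul_of_nonneg_left (h.mixed_mid.abs_planarDet_le_mul h.mixed_right)
    (abs_nonneg (ℓ a))
  linarith [h.one_third_lt hF hg hK]

theorem abs_linForm_mid_mul_height_le (h : IsMixedTriple α₁ α₂ B₀ a b c)
    (hF : ∀ B ≥ B₀, NoPositiveApprox α₁ α₂ g K B) (hg : g ≤ 2) (hK : 648 ≤ K) :
    |ℓ b| * height c ≤ 3 * (|ℓ a| * height b) := by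
  refine le_of_mul_le_mul_right ?_ h.consecutive_right.height_pos_right
  linarith [h.one_lt_three_mul hF hg hK, h.consecutive_right.abs_linForm_mul_sq_height_le_one]

theorem abs_linForm_mid_le_div (h : IsMixedTriple α₁ α₂ B₀ a b c)
    (hF : ∀ B ≥ B₀, NoPositiveApprox α₁ α₂ g K B) (hg : g ≤ 2) (hK : 2 ^ 18 ≤ K) :
    |ℓ b| ≤ |ℓ a| / 20 := by
  refine le_of_mul_le_mul_right ?_ h.consecutive_right.height_pos
  have := mul_le_mul_of_nonneg_left (h.sixty_mul_height_le hF hg hK) (abs_nonneg (ℓ b))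
  linarith [h.abs_linForm_mid_mul_height_le hF hg (by linarith)]

theorem abs_linForm_mid_le_sq (h : IsMixedTriple α₁ α₂ B₀ a b c)
    (hF : ∀ B ≥ B₀, NoPositiveApprox α₁ α₂ g K B) (hg : g ≤ 2) (hK : 648 ≤ K) :
    |ℓ b| ≤ 9 * (|ℓ a| * height b) ^ 2 := by
  have := height_nonneg b
  calc |ℓ b| = |ℓ b| * 1 := (mul_one _).symm
    _ ≤ |ℓ b| * (3 * (|ℓ a| * height b) * height c) := by
      gcongr
      exact (h.one_lt_three_mul hF hg hK).le
    _ = 3 * (|ℓ a| * height b) * (|ℓ b| * height c) := by ring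
    _ ≤ 3 * (|ℓ a| * height b) * (3 * (|ℓ a| * height b)) := by
      gcongr 3 * (|ℓ a| * height b) * ?_
      exact h.abs_linForm_mid_mul_height_le hF hg hK
    _ = 9 * (|ℓ a| * height b) ^ 2 := by ring

end IsMixedTriple

end Mixed

/-! ### Estimates at the ends of a coplanar stretch -/

section Inequalities

variable {α₁ α₂ ε g B₀ H K T : ℝ} {a b c y : Fin 3 → ℤ} {i : Fin 3}

local notation "ℓ" => linForm α₁ α₂

theorem exists_abs_planarDet_lt (α₁ α₂ : ℝ) (hb : 0 < height b) (hε : 0 ≤ ε) (hT : 0 ≤ T)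
    (h : 1 < ε * T) : ∃ y ≠ 0, |linForm α₁ α₂ y| < ε ∧ |(planarDet b y : ℝ)| < T ∧
      ∃ i ≠ 0, |(b i : ℝ)| = height b ∧ |(y i : ℝ)| < height b := by
  obtain ⟨i, hi, hbi⟩ := exists_abs_apply_eq_height b
  let A : Matrix (Fin 3) (Fin 3) ℝ := Matrix.of ![![1, α₁, α₂], ![0, -b 2, b 1], Pi.single i 1]
  have h_det : |A.det| = height b := by
    rw [← hbi, Matrix.det_fin_three]
    rcases eq_one_or_eq_two_of_ne_zero hi with rfl | rfl <;> simp [A]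
  obtain ⟨y, hy, hA⟩ := exists_int_ne_zero_abs_mulVec_lt (A := A) (c := ![ε, T, height b])
    (Fin.forall_fin_succ.mpr ⟨hε, by simp [hT, hb.le]⟩) (abs_pos.mp (h_det ▸ hb))
    (by simpa [h_det, Fin.prod_univ_three] using (lt_mul_iff_one_lt_left hb).mpr h)
  simp only [Fin.forall_fin_succ, Matrix.mulVec, A] at hA
  refine ⟨y, hy, ?_, ?_, i, hi, hbi, by simpa using hA.2.2.1⟩
  · simpa [linForm_apply, dotProduct, Fin.sum_univ_three] using hA.1
  · have hy_det : |(-b 2 * y 1 + b 1 * y 2 : ℝ)| < T := by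
      simpa [dotProduct, Fin.sum_univ_three] using hA.2.1
    rw [planarDet]
    push_cast
    convert hy_det using 2
    ring

theorem height_mul_height_le (hi : i ≠ 0) (hbi : |(b i : ℝ)| = height b)
    (hyi : |(y i : ℝ)| ≤ height b) :
    height b * height y ≤ height b ^ 2 + |(planarDet b y : ℝ)| := by
  obtain ⟨k, hk, hyk⟩ := exists_abs_apply_eq_height y
  have h_det := (abs_sub_comm _ _).trans_le (abs_mul_sub_mul_le_abs_planarDet b y hi hk)
  have h_prod : |(b k * y i : ℝ)| ≤ height b * height b := by
    rw [abs_mul]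
    exact mul_le_mul (abs_apply_le_height b hk) hyi (abs_nonneg _) (height_nonneg b)
  rw [← hbi, ← hyk, ← abs_mul, hbi]
  linarith [abs_sub_abs_le_abs_sub (b i * y k : ℝ) (b k * y i)]

namespace IsConsecutiveBest

theorem tripleDet_ne_zero (h : IsConsecutiveBest α₁ α₂ a b) (hd : planarDet a b ≠ 0)
    (hab : |ℓ b| ≤ |ℓ a| / 20) (hy : y ≠ 0) (hy_form : |ℓ y| < |ℓ a| / 4) (hi : i ≠ 0)
    (hbi : |(b i : ℝ)| = height b) (hyi : |(y i : ℝ)| < height b) : tripleDet a b y ≠ 0 := by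
  intro h_zero
  obtain ⟨p, q, rfl⟩ := h.exists_eq_zsmul_add_zsmul hd h_zero
  have ha := h.abs_linForm_pos
  have hb := h.height_pos_right
  have hq : |(q : ℝ)| < |(p : ℝ)| + 1 := by
    have h_le : |(q : ℝ)| * height b ≤ |((p • a + q • b) i : ℝ)| + |(p : ℝ)| * height b := by
      calc |(q : ℝ)| * height b = |((p • a + q • b) i : ℝ) - p * a i| := by
            rw [← hbi, ← abs_mul]
            simp
        _ ≤ |((p • a + q • b) i : ℝ)| + |(p : ℝ)| * |(a i : ℝ)| := by
            rw [← abs_mul]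
            exact abs_sub _ _
        _ ≤ |((p • a + q • b) i : ℝ)| + |(p : ℝ)| * height b := by
            gcongr
            exact (abs_apply_le_height a hi).trans h.height_lt.le
    nlinarith
  have hp : |(p : ℝ)| * |ℓ a| < |ℓ a| / 4 + |(q : ℝ)| * (|ℓ a| / 20) := by
    calc |(p : ℝ)| * |ℓ a| = |ℓ (p • a + q • b) - q * ℓ b| := by
          rw [← abs_mul, map_add, map_zsmul, map_zsmul, zsmul_eq_mul, zsmul_eq_mul,
            add_sub_cancel_right]
      _ ≤ |ℓ (p • a + q • b)| + |(q : ℝ)| * |ℓ b| := by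
          rw [← abs_mul]
          exact abs_sub _ _
      _ < |ℓ a| / 4 + |(q : ℝ)| * (|ℓ a| / 20) := add_lt_add_of_lt_of_le hy_form (by gcongr)
  have hp_zero : p = 0 := Int.abs_lt_one_iff.mp (mod_cast (by nlinarith : |(p : ℝ)| < 1))
  rw [hp_zero, Int.cast_zero, abs_zero, zero_add] at hq
  have hq_zero : q = 0 := Int.abs_lt_one_iff.mp (mod_cast hq)
  simp [hp_zero, hq_zero] at hy

theorem exists_transversal (h : IsConsecutiveBest α₁ α₂ a b) (hb : 2 < height b)
    (hab : |ℓ b| ≤ |ℓ a| / 20) :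
    ∃ y, tripleDet a b y ≠ 0 ∧ |ℓ y| < |ℓ a| / 4 ∧ |ℓ a| * |(planarDet b y : ℝ)| < 5 ∧
      |ℓ a| * height b * height y ≤ 6 := by
  have ha := h.abs_linForm_pos
  obtain ⟨y, hy, hy_form, hy_det, i, hi, hbi, hyi⟩ := exists_abs_planarDet_lt α₁ α₂
    h.height_pos_right (ε := |ℓ a| / 4) (T := 5 / |ℓ a|) (by positivity) (by positivity)
    (by field_simp; norm_num)
  rw [lt_div_iff₀' ha] at hy_det
  refine ⟨y, h.tripleDet_ne_zero (h.planarDet_ne_zero hb) hab hy hy_form hi hbi hyi, hy_form,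
    hy_det, ?_⟩
  have h_height := mul_le_mul_of_nonneg_left (height_mul_height_le hi hbi hyi.le) ha.le
  linarith [h.abs_linForm_mul_sq_height_le_one]

theorem three_twentieths_le (h : IsConsecutiveBest α₁ α₂ a b) (ha : IsMixed a) (hb : IsMixed b)
    (hab : |ℓ b| ≤ |ℓ a| / 20) (hy : tripleDet a b y ≠ 0) (hy_form : |ℓ y| ≤ |ℓ a| / 4)
    (hy_height : |ℓ a| * height b * height y ≤ 6) :
    3 / 20 ≤ |ℓ a| * |(planarDet b y : ℝ)| := by
  have hb_height := height_nonneg b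
  have hy_nonneg := height_nonneg y
  have h_ay : |ℓ b| * |(planarDet a y : ℝ)| ≤ 3 / 5 := by
    calc |ℓ b| * |(planarDet a y : ℝ)| ≤ |ℓ a| / 20 * (2 * height b * height y) := by
          gcongr
          refine (abs_planarDet_le a y).trans ?_
          gcongr
          exact h.height_lt.le
      _ ≤ 3 / 5 := by linarith
  have h_ab : |ℓ y| * |(planarDet a b : ℝ)| ≤ 1 / 4 := by
    calc |ℓ y| * |(planarDet a b : ℝ)| ≤ |ℓ a| / 4 * (height b * height b) := by
          gcongr
          refine (ha.abs_planarDet_le_mul hb).trans ?_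
          gcongr
          exact h.height_lt.le
      _ ≤ 1 / 4 := by linarith [h.abs_linForm_mul_sq_height_le_one]
  linarith [one_le_abs_linForm_mul_add (α₁ := α₁) (α₂ := α₂) hy]

end IsConsecutiveBest

namespace IsMixedTriple

theorem transversal_width_le (h : IsMixedTriple α₁ α₂ B₀ a b c)
    (hF : ∀ B ≥ B₀, NoPositiveApprox α₁ α₂ g K B) (hg : g ≤ 2) (hK : 648 ≤ K)
    (hy_form : |ℓ y| ≤ |ℓ a| / 4) (hy_height : |ℓ a| * height b * height y ≤ 6) :
    2 * height y * |ℓ b| + height b * |ℓ y| ≤ 433 / 4 * (|ℓ a| * height b) := by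
  have hb := height_nonneg b
  have hy := height_nonneg y
  have h_fst : height y * |ℓ b| ≤ height y * (9 * (|ℓ a| * height b) ^ 2) := by
    gcongr
    exact h.abs_linForm_mid_le_sq hF hg hK
  have h_snd : height b * |ℓ y| ≤ height b * (|ℓ a| / 4) := by gcongr
  nlinarith [mul_le_mul_of_nonneg_left hy_height (mul_nonneg (abs_nonneg (ℓ a)) hb)]

theorem mul_rpow_lt_of_transversal (h : IsMixedTriple α₁ α₂ B₀ a b c)
    (hF : ∀ B ≥ B₀, NoPositiveApprox α₁ α₂ g K B) (hg : g ≤ 2) (hK : 648 ≤ K)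
    (hy_form : |ℓ y| ≤ |ℓ a| / 4) (hy_det : |ℓ a| * |(planarDet b y : ℝ)| ≤ 5)
    (hy_height : |ℓ a| * height b * height y ≤ 6)
    (hD : 3 / 20 ≤ |ℓ a| * |(planarDet b y : ℝ)|) :
    K * (|ℓ a| * height b) ^ g < 2 ^ 15 * |ℓ a| := by
  have hab := h.consecutive_left
  have ha := hab.abs_linForm_pos
  have hb := hab.height_pos_right
  have hb_sq := hab.abs_linForm_mul_sq_height_le_one
  set D := |(planarDet b y : ℝ)|
  set t := |ℓ a| * height b with ht_def
  have ht : 0 < t := by positivity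
  have hD_pos : 0 < D := pos_of_mul_pos_right (by linarith) ha.le
  have hX : height b + D / height b ≤ 23 / 3 * D / height b := by
    rw [le_div_iff₀ hb, add_mul, div_mul_cancel₀ _ hb.ne']
    nlinarith
  have hXB : height b + D / height b ≤ 6 / t := by
    rw [le_div_iff₀ ht, ht_def, add_mul]
    have : D / height b * (|ℓ a| * height b) = |ℓ a| * D := by field
    linarith
  have hB : B₀ ≤ 6 / t := by
    have := div_nonneg hD_pos.le hb.le
    linarith [h.le_height, hab.height_lt]
  have hW := h.transversal_width_le hF hg hK hy_form hy_height
  have h_lt := (hF _ hB).mul_abs_planarDet_lt h.mixed_mid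
    (Int.cast_ne_zero.mp (abs_pos.mp hD_pos)) le_rfl hXB hW
  have h_rpow : (6 / t) ^ g ≤ 36 / t ^ g := by
    rw [Real.div_rpow (by norm_num) ht.le]
    gcongr
    exact (rpow_le_sq (by norm_num) hg).trans_eq (by norm_num)
  refine lt_of_mul_lt_mul_right ?_ hD_pos.le
  calc K * t ^ g * D = K * D * t ^ g := by ring
    _ < (23 / 3 * D / height b) * (433 / 4 * t) * (36 / t ^ g) * t ^ g := by
      gcongr ?_ * _
      refine h_lt.trans_le ?_
      gcongr
    _ = 29877 * |ℓ a| * D := by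
      rw [ht_def]
      field
    _ ≤ 2 ^ 15 * |ℓ a| * D := by
      gcongr
      norm_num

theorem mul_rpow_lt (h : IsMixedTriple α₁ α₂ B₀ a b c)
    (hF : ∀ B ≥ B₀, NoPositiveApprox α₁ α₂ g K B) (hB₀ : 2 ≤ B₀) (hg : g ≤ 2) (hK : 2 ^ 18 ≤ K) :
    K * (|ℓ a| * height b) ^ g < 2 ^ 15 * |ℓ a| := by
  have hab := h.consecutive_left
  have hba := h.abs_linForm_mid_le_div hF hg hK
  obtain ⟨y, hy, hy_form, hy_det, hy_height⟩ := hab.exists_transversal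
    (by linarith [h.le_height, hab.height_lt]) hba
  exact h.mul_rpow_lt_of_transversal hF hg (by linarith) hy_form.le hy_det.le hy_height
    (hab.three_twentieths_le h.mixed_left h.mixed_mid hba hy hy_form.le hy_height)

theorem mul_height_rpow_lt (h : IsMixedTriple α₁ α₂ B₀ a b c)
    (hF : ∀ B ≥ B₀, NoPositiveApprox α₁ α₂ g K B) (hg : g ≤ 2) (hK : 648 ≤ K)
    (hH : |ℓ b| * height c ≤ H) :
    K * (height b * height b ^ g) < 2 ^ 8 * (H * |(planarDet b c : ℝ)| ^ g) := by
  have hbc := h.consecutive_right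
  have hb := hbc.height_pos
  have hD := h.one_third_lt hF hg hK
  set D := |(planarDet b c : ℝ)|
  have hD_pos : 0 < D := pos_of_mul_pos_right (by linarith) (abs_nonneg (ℓ a))
  have hd : planarDet b c ≠ 0 := Int.cast_ne_zero.mp (abs_pos.mp hD_pos)
  have hH_nonneg : 0 ≤ H := (mul_nonneg (abs_nonneg _) (height_nonneg c)).trans hH
  have hbD : height b ^ 2 ≤ 3 * D := by
    refine le_of_mul_le_mul_left ?_ h.consecutive_left.abs_linForm_pos
    linarith [h.consecutive_left.abs_linForm_mul_sq_height_le_one]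
  have hX : height b + D / height b ≤ 4 * D / height b := by
    rw [le_div_iff₀ hb, add_mul, div_mul_cancel₀ _ hb.ne']
    linarith
  have hB : B₀ ≤ 4 * D / height b := by
    rw [le_div_iff₀ hb]
    nlinarith [h.le_height, h.consecutive_left.height_lt]
  have hW : 2 * height c * |ℓ b| + height b * |ℓ c| ≤ 3 * H := by
    nlinarith [mul_le_mul hbc.height_lt.le hbc.abs_lt.le (abs_nonneg _) (height_nonneg c)]
  have h_lt := (hF _ hB).mul_abs_planarDet_lt h.mixed_mid hd hX le_rfl hW
  have h_rpow : (4 * D / height b) ^ g ≤ 16 * D ^ g / height b ^ g := by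
    rw [Real.div_rpow (by positivity) hb.le, Real.mul_rpow (by norm_num) hD_pos.le]
    gcongr
    exact (rpow_le_sq (by norm_num) hg).trans_eq (by norm_num)
  refine lt_of_mul_lt_mul_right ?_ hD_pos.le
  calc K * (height b * height b ^ g) * D = K * D * (height b * height b ^ g) := by ring
    _ < 4 * D / height b * (3 * H) * (16 * D ^ g / height b ^ g) * (height b * height b ^ g) := by
      gcongr ?_ * _
      refine h_lt.trans_le ?_
      gcongr
    _ = 192 * (H * D ^ g) * D := by field
    _ ≤ 2 ^ 8 * (H * D ^ g) * D := by
      gcongr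
      norm_num

end IsMixedTriple

end Inequalities

/-! ### Elimination -/

/-- The relations between the exponent `γ` of the Diophantine condition, the exponent `g = g(γ)` and
the exponent `κ` of `1 / Γ` in `C(Γ)` under which the four estimates of the proof are
incompatible. -/
structure AdmissibleExponents (γ g κ : ℝ) : Prop where
  two_le : 2 ≤ γ
  one_lt : 1 < g
  le_two : g ≤ 2
  pos : 0 < κ
  sub_one_le : g - 1 ≤ κ * (g * γ + 1)
  mul_sub_le : γ * (g ^ 2 - g - 1) ≤ g

section Elimination

variable {α₁ α₂ A B₀ D F Z Γ γ g κ : ℝ} {a₀ a a' e f f' : Fin 3 → ℤ}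

local notation "ℓ" => linForm α₁ α₂

theorem AdmissibleExponents.linear_system_false {d m s x z : ℝ} (h : AdmissibleExponents γ g κ)
    (hs : 0 < s) (hx : 0 < x) (h₁ : κ * s + g * (z + x) < z) (h₂ : κ * s + d < z + (2 + g) * x)
    (h₃ : κ * s + (1 + g) * m < z + x + g * d) (h₄ : d ≤ s + z + x + (1 + γ) * m) : False := by
  have hγ := h.two_le
  have hg := h.one_lt
  have without_m : (1 + γ) * (κ * s) < (g * γ - 1) * d + (1 + g) * s + (2 + γ + g) * (z + x) := by
    linarith [mul_lt_mul_of_pos_left h₃ (by linarith : 0 < 1 + γ),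
      mul_le_mul_of_nonneg_left h₄ (by linarith : 0 ≤ 1 + g)]
  have without_d : γ * (κ * s) < s + (1 + γ) * z + γ * (1 + g) * x := by
    refine lt_of_mul_lt_mul_left ?_ (by linarith : 0 ≤ 1 + g)
    linarith [mul_lt_mul_of_pos_left h₂ (by nlinarith : 0 < g * γ - 1)]
  have without_z : s * (κ * (g * γ + 1)) + x * g < s * (g - 1) + x * (γ * (g ^ 2 - g - 1)) := by
    linarith [mul_lt_mul_of_pos_left without_d (by linarith : 0 < g - 1),
      mul_lt_mul_of_pos_left h₁ (by linarith : 0 < 1 + γ)]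
  linarith [mul_le_mul_of_nonneg_left h.sub_one_le hs.le,
    mul_le_mul_of_nonneg_left h.mul_sub_le hx.le]

theorem AdmissibleExponents.rpow_system_false (h : AdmissibleExponents γ g κ)
    (hΓ : Γ ∈ Set.Ioo 0 1) (hA : 0 < A) (hD : 0 < D) (hF : 1 < F) (hZ : 0 < Z)
    (h₁ : Γ ^ (-κ) * (Z * F) ^ g < Z) (h₂ : Γ ^ (-κ) * D < Z * F ^ (2 + g))
    (h₃ : Γ ^ (-κ) * A ^ (1 + g) < Z * F * D ^ g) (h₄ : Γ * D ≤ Z * F * A ^ (1 + γ)) : False := by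
  obtain ⟨hΓ_pos, hΓ_lt⟩ := hΓ
  have hF_pos : 0 < F := one_pos.trans hF
  have log₁ := Real.log_lt_log (by positivity) h₁
  have log₂ := Real.log_lt_log (by positivity) h₂
  have log₃ := Real.log_lt_log (by positivity) h₃
  have log₄ := Real.log_le_log (by positivity) h₄
  have h_log {x y : ℝ} (hx : 0 < x) (hy : 0 < y) := Real.log_mul hx.ne' hy.ne'
  have hZF := mul_pos hZ hF_pos
  simp only [h_log, Real.log_rpow, Real.rpow_pos_of_pos, hZF, hΓ_pos, hA, hD, hF_pos, hZ]
    at log₁ log₂ log₃ log₄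
  exact h.linear_system_false (m := Real.log A) (d := Real.log D) (z := Real.log Z)
    (neg_pos.mpr (Real.log_neg hΓ_pos hΓ_lt)) (Real.log_pos hF)
    (by linarith) (by linarith) (by linarith) (by linarith)

theorem IsConsecutiveBest.abs_linForm_mul_height_le (ha : IsConsecutiveBest α₁ α₂ a a')
    (he : IsConsecutiveBest α₁ α₂ e f) (h_mixed : IsMixed a) (h_mixed' : IsMixed a')
    (h_minor : ∀ i, |formMinor α₁ α₂ i e f| = |formMinor α₁ α₂ i a a'|) :
    |ℓ a| * height a' ≤ 2 * (|ℓ e| * height f) := by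
  obtain ⟨i, hi, h_le⟩ := ha.exists_mul_height_le_abs_formMinor h_mixed h_mixed'
  exact h_le.trans (h_minor i ▸ he.abs_formMinor_le hi)

theorem IsMixed.mul_abs_planarDet_le_of_div_le (ha : IsMixed a) (ha' : IsMixed a')
    (h_pos : 0 < height a) (h : Γ / height a ^ γ ≤ |ℓ a|) :
    Γ * |(planarDet a a' : ℝ)| ≤ |ℓ a| * height a' * height a ^ (1 + γ) := by
  rw [div_le_iff₀ (by positivity)] at h
  calc Γ * |(planarDet a a' : ℝ)| ≤ |ℓ a| * height a ^ γ * (height a * height a') := by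
        gcongr
        exact ha.abs_planarDet_le_mul ha'
    _ = |ℓ a| * height a' * height a ^ (1 + γ) := by
        rw [Real.rpow_add h_pos, Real.rpow_one]
        ring

theorem two_mul_rpow_one_add_le (hA : 0 < A) (hg : g ≤ 2) :
    (2 * A) ^ (1 + g) ≤ 2 ^ 3 * (A * A ^ g) := by
  rw [Real.mul_rpow two_pos.le hA.le, Real.rpow_add hA, Real.rpow_one, ← Real.rpow_natCast 2]
  gcongr
  · exact one_le_two
  · norm_num
    linarith

theorem two_mul_rpow_one_add_le_rpow (hA : 0 ≤ A) (hγ : 0 ≤ γ) :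
    2 * A ^ (1 + γ) ≤ (2 * A) ^ (1 + γ) := by
  rw [Real.mul_rpow two_pos.le hA]
  gcongr
  exact Real.self_le_rpow_of_one_le one_le_two (by linarith)

theorem IsMixedTriple.false_of_abs_planarDet_eq (hΓ : Γ ∈ Set.Ioo 0 1)
    (hE : AdmissibleExponents γ g κ) (hB₀ : 2 ≤ B₀)
    (hF : ∀ B ≥ B₀, NoPositiveApprox α₁ α₂ g (2 ^ 18 * Γ ^ (-κ)) B)
    (hdio : Γ / height a ^ γ ≤ |ℓ a|) (ha : IsMixedTriple α₁ α₂ B₀ a₀ a a')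
    (he : IsMixedTriple α₁ α₂ B₀ e f f') (h_det : |planarDet e f| = |planarDet a a'|)
    (h_minor : ∀ i, |formMinor α₁ α₂ i e f| = |formMinor α₁ α₂ i a a'|) : False := by
  have hK : (2 : ℝ) ^ 18 ≤ 2 ^ 18 * Γ ^ (-κ) := le_mul_of_one_le_right (by positivity) <|
    Real.one_le_rpow_of_pos_of_le_one_of_nonpos hΓ.1 hΓ.2.le (neg_nonpos.mpr hE.pos.le)
  have hA := ha.consecutive_right.height_pos
  have hf := he.consecutive_left.height_pos_right
  have hZ := he.consecutive_left.abs_linForm_pos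
  have hd : planarDet a a' ≠ 0 := ha.consecutive_right.planarDet_ne_zero
    (by linarith [ha.le_height, ha.consecutive_left.height_lt, ha.consecutive_right.height_lt])
  have hH := ha.consecutive_right.abs_linForm_mul_height_le he.consecutive_left ha.mixed_mid
    ha.mixed_right h_minor
  have bound₁ := he.mul_rpow_lt hF hB₀ hE.le_two hK
  have bound₂ := (hF _ he.le_two_mul_height_mid).mul_abs_planarDet_lt_of_isMixed hE.le_two
    he.mixed_left he.mixed_mid (abs_ne_zero.mp (h_det ▸ abs_ne_zero.mpr hd))
    he.consecutive_left.height_lt.le he.consecutive_left.abs_lt.le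
  have bound₃ := ha.mul_height_rpow_lt hF hE.le_two (by linarith) hH
  have bound₄ := ha.mixed_mid.mul_abs_planarDet_le_of_div_le ha.mixed_right hA hdio
  rw [← Int.cast_abs, h_det, Int.cast_abs] at bound₂
  have hD : 0 < |(planarDet a a' : ℝ)| := abs_pos.mpr (Int.cast_ne_zero.mpr hd)
  -- Doubling `height a` absorbs the factor `2` of `bound₄`.
  refine hE.rpow_system_false hΓ (A := 2 * height a) (F := height f) (by positivity) hD
    (by linarith [he.le_height, he.consecutive_left.height_lt]) hZ (by linarith) ?_ ?_ ?_
  · rw [Real.rpow_add hf, Real.rpow_two]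
    have : 0 < |ℓ e| * height f ^ 2 * height f ^ g := by positivity
    linarith
  · have h_le := mul_le_mul_of_nonneg_left (two_mul_rpow_one_add_le hA hE.le_two)
      (Real.rpow_nonneg hΓ.1.le (-κ))
    have : 0 < |ℓ e| * height f * |(planarDet a a' : ℝ)| ^ g := by positivity
    linarith
  · calc Γ * |(planarDet a a' : ℝ)| ≤ 2 * (|ℓ e| * height f) * height a ^ (1 + γ) :=
          bound₄.trans (by gcongr)
      _ = |ℓ e| * height f * (2 * height a ^ (1 + γ)) := by ring
      _ ≤ |ℓ e| * height f * (2 * height a) ^ (1 + γ) := by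
          gcongr
          exact two_mul_rpow_one_add_le_rpow hA.le (by linarith [hE.two_le])

end Elimination

/-! ### The sequence of best approximations -/

/-- Consecutive best approximations of height at least `B₀`, with signs chosen so that they are
all mixed. -/
structure IsMixedBestSeq (α₁ α₂ B₀ : ℝ) (m : ℕ → Fin 3 → ℤ) : Prop where
  consecutive : ∀ k, IsConsecutiveBest α₁ α₂ (m k) (m (k + 1))
  mixed : ∀ k, IsMixed (m k)
  le_height : ∀ k, B₀ ≤ height (m k)

section BestSequence

variable {α₁ α₂ g B₀ K Γ γ κ : ℝ} {a b a' b' v w : Fin 3 → ℤ} {m : ℕ → Fin 3 → ℤ}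

local notation "ℓ" => linForm α₁ α₂

theorem exists_isConsecutiveBest_seq (hℓ : ∀ x, 0 < height x → ℓ x ≠ 0) :
    ∃ u : ℕ → Fin 3 → ℤ, ∀ k, IsConsecutiveBest α₁ α₂ (u k) (u (k + 1)) := by
  obtain ⟨v, hv_pos, hv_le, hv⟩ := exists_abs_linForm_le_of_height_le α₁ α₂ le_rfl
  choose next next_best next_consecutive using fun v : {v // IsBestApprox α₁ α₂ v} =>
    v.2.exists_isConsecutiveBest hℓ
  let u : ℕ → {v // IsBestApprox α₁ α₂ v} := fun k =>
    (fun v => ⟨next v, next_best v⟩)^[k] ⟨v, hv_pos, fun x hx hxv => hv x hx (hxv.trans hv_le)⟩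
  refine ⟨fun k => u k, fun k => ?_⟩
  simp only [u, Function.iterate_succ_apply']
  exact next_consecutive _

theorem IsConsecutiveBest.of_eq_or_eq_neg (h : IsConsecutiveBest α₁ α₂ a b)
    (ha : a' = a ∨ a' = -a) (hb : b' = b ∨ b' = -b) : IsConsecutiveBest α₁ α₂ a' b' := by
  obtain ⟨h₁, h₂, h₃, h₄⟩ := h
  rcases ha with rfl | rfl <;> rcases hb with rfl | rfl <;> constructor <;>
    simpa only [height_neg, map_neg, abs_neg]

theorem IsConsecutiveBest.exists_isMixed (h : IsConsecutiveBest α₁ α₂ v w)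
    (hF : NoPositiveApprox α₁ α₂ g K (height v)) (hg : g ≤ 2) (hK : 1 ≤ K) :
    ∃ x, (x = v ∨ x = -v) ∧ IsMixed x := by
  have h_le : |ℓ v| * height v ^ g ≤ K := by
    calc |ℓ v| * height v ^ g ≤ |ℓ v| * height w ^ 2 := by
          have := h.height_lt.le
          have := height_nonneg v
          gcongr
          exact (rpow_le_sq (one_le_height h.height_pos) hg).trans (by gcongr)
      _ ≤ K := h.abs_linForm_mul_sq_height_le_one.trans hK
  have h_not_pos : ¬ (0 < v 1 ∧ 0 < v 2) := fun h_pos =>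
    h_le.not_gt (hF v h_pos.1 h_pos.2 le_rfl)
  have h_not_neg : ¬ (v 1 < 0 ∧ v 2 < 0) := fun h_neg => h_le.not_gt <| by
    simpa using hF (-v) (by simpa using h_neg.1) (by simpa using h_neg.2) (height_neg v).le
  have h_mixed : IsMixed v ∨ IsMixed (-v) := by
    simp only [IsMixed, Pi.neg_apply]
    omega
  exact h_mixed.elim (fun h => ⟨v, .inl rfl, h⟩) fun h => ⟨-v, .inr rfl, h⟩

theorem exists_isMixedBestSeq (hℓ : ∀ x, 0 < height x → ℓ x ≠ 0)
    (hF : ∀ B ≥ B₀, NoPositiveApprox α₁ α₂ g K B) (hg : g ≤ 2) (hK : 1 ≤ K) :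
    ∃ m, IsMixedBestSeq α₁ α₂ B₀ m := by
  obtain ⟨u, hu⟩ := exists_isConsecutiveBest_seq hℓ
  obtain ⟨N, hN⟩ := eventually_atTop.mp <|
    (tendsto_height_atTop fun k => (hu k).height_lt).eventually_ge_atTop B₀
  choose m hm h_mixed using fun k =>
    (hu (N + k)).exists_isMixed (hF _ (hN _ (Nat.le_add_right N k))) hg hK
  refine ⟨m, fun k => (hu (N + k)).of_eq_or_eq_neg (hm k) (hm (k + 1)), h_mixed, fun k => ?_⟩
  have h_height : height (m k) = height (u (N + k)) := by
    rcases hm k with h | h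
    · rw [h]
    · rw [h, height_neg]
  exact (hN _ (Nat.le_add_right N k)).trans_eq h_height.symm

theorem IsMixedBestSeq.isMixedTriple (h : IsMixedBestSeq α₁ α₂ B₀ m) {k : ℕ}
    (hk : tripleDet (m k) (m (k + 1)) (m (k + 2)) ≠ 0) :
    IsMixedTriple α₁ α₂ B₀ (m k) (m (k + 1)) (m (k + 2)) :=
  ⟨h.consecutive k, h.consecutive (k + 1), h.mixed k, h.mixed (k + 1), h.mixed (k + 2),
    h.le_height k, hk⟩

theorem not_forall_noPositiveApprox (hΓ : Γ ∈ Set.Ioo 0 1) (hE : AdmissibleExponents γ g κ)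
    (hB₀ : 2 < B₀) (hdio : ∀ v, 0 < height v → Γ / height v ^ γ ≤ |ℓ v|) :
    ¬ ∀ B ≥ B₀, NoPositiveApprox α₁ α₂ g (2 ^ 18 * Γ ^ (-κ)) B := by
  intro hF
  have hℓ : ∀ x, 0 < height x → ℓ x ≠ 0 := fun x hx =>
    abs_pos.mp ((div_pos hΓ.1 (Real.rpow_pos_of_pos hx γ)).trans_le (hdio x hx))
  have hK : 1 ≤ 2 ^ 18 * Γ ^ (-κ) := one_le_mul_of_one_le_of_one_le (by norm_num) <|
    Real.one_le_rpow_of_pos_of_le_one_of_nonpos hΓ.1 hΓ.2.le (neg_nonpos.mpr hE.pos.le)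
  obtain ⟨m, hm⟩ := exists_isMixedBestSeq hℓ hF hE.le_two hK
  have h_height : ∀ k, 2 < height (m k) := fun k => hB₀.trans_le (hm.le_height k)
  obtain ⟨l, hl⟩ := exists_tripleDet_ne_zero hm.consecutive h_height
  -- The tail after `l` also leaves the plane of its first two terms; `n` is where it first does so.
  set t : ℕ → Fin 3 → ℤ := fun k => m (l + 1 + k)
  have ht : ∀ k, IsConsecutiveBest α₁ α₂ (t k) (t (k + 1)) := fun k => hm.consecutive _
  have h_exists := exists_tripleDet_ne_zero ht fun k => h_height _
  classical
  set n := Nat.find h_exists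
  have h_coplanar : ∀ j < n, tripleDet (t j) (t (j + 1)) (t (j + 2)) = 0 :=
    fun j hj => of_not_not (Nat.find_min h_exists hj)
  have h_det : |planarDet (t n) (t (n + 1))| = |planarDet (t 0) (t 1)| :=
    eq_of_tripleDet_eq_zero (F := fun a b => |planarDet a b|)
      (fun k => (ht k).abs_planarDet_eq (ht (k + 1)) (h_height _)) h_coplanar
  have h_minor : ∀ i, |formMinor α₁ α₂ i (t n) (t (n + 1))| = |formMinor α₁ α₂ i (t 0) (t 1)| :=
    fun i => eq_of_tripleDet_eq_zero (F := fun a b => |formMinor α₁ α₂ i a b|)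
      (fun k hk => (ht k).abs_formMinor_eq (ht (k + 1)) (h_height _) hk i) h_coplanar
  exact (hm.isMixedTriple hl).false_of_abs_planarDet_eq hΓ hE hB₀.le hF
    (hdio _ (hm.consecutive _).height_pos) (hm.isMixedTriple (Nat.find_spec h_exists)) h_det h_minor

end BestSequence

/-! ### Admissibility of `g(γ)` -/

section Exponents

variable {γ κ : ℝ}

theorem tau_sq : tau ^ 2 = tau + 1 :=
  Real.goldenRatio_sq

theorem tau_mem_Ioo : tau ∈ Set.Ioo 1.6 1.62 := by
  have h_lower : (2.2 : ℝ) < √5 := Real.lt_sqrt_of_sq_lt (by norm_num)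
  have h_upper : √5 < 2.24 := (Real.sqrt_lt' (by norm_num)).mpr (by norm_num)
  constructor <;> unfold tau <;> linarith

theorem gfun_eq (γ : ℝ) : gfun γ = tau + 2 * (tau - 1) * (tau ^ 2 * γ - 2)⁻¹ := by
  rw [gfun]
  ring

theorem Cconst_eq (Γ γ : ℝ) : Cconst Γ γ = 2 ^ 18 * Γ ^ (-(tau ^ 2 * γ - 2)⁻¹) := by
  rw [Cconst, tau_sq]
  ring_nf

theorem gfun_sub_one_le (hκ : 0 ≤ κ) (h : κ * γ * (tau + 1) = 1 + 2 * κ) :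
    tau + 2 * (tau - 1) * κ - 1 ≤ κ * ((tau + 2 * (tau - 1) * κ) * γ + 1) := by
  have h_tau := tau_mem_Ioo.1
  refine le_of_mul_le_mul_right ?_ (by linarith : 0 < tau + 1)
  have h_diff : 0 ≤ κ * (3 * tau - 1 + 4 * (tau - 1) * κ) :=
    mul_nonneg hκ (by nlinarith)
  linear_combination h_diff + (1 + 2 * κ) * tau_sq - (tau + 2 * (tau - 1) * κ) * h

theorem mul_gfun_sq_sub_le (hκ_pos : 0 < κ) (hκ_le : 2 * tau * κ ≤ 1)
    (h : κ * γ * (tau + 1) = 1 + 2 * κ) :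
    γ * ((tau + 2 * (tau - 1) * κ) ^ 2 - (tau + 2 * (tau - 1) * κ) - 1) ≤
      tau + 2 * (tau - 1) * κ := by
  obtain ⟨h_lower, h_upper⟩ := tau_mem_Ioo
  have h_sq : (tau + 2 * (tau - 1) * κ) ^ 2 - (tau + 2 * (tau - 1) * κ) - 1 =
      2 * (tau - 1) * κ * (2 * tau - 1 + 2 * (tau - 1) * κ) := by
    linear_combination tau_sq
  -- Equality holds for `2 * tau * κ = 1`, that is, for `γ = 2`.
  have h_diff : (tau + 2 * (tau - 1) * κ) * (tau + 1) -
      (1 + 2 * κ) * (2 * (tau - 1) * (2 * tau - 1 + 2 * (tau - 1) * κ)) =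
      (1 - 2 * tau * κ) * (tau - 1) * (4 * (2 - tau) * κ + (4 - tau)) := by
    linear_combination (-2 + (2 - 2 * tau) * κ + 4 * (2 - 2 * tau) * κ ^ 2) * tau_sq
  have h_nonneg : 0 ≤ (1 - 2 * tau * κ) * (tau - 1) * (4 * (2 - tau) * κ + (4 - tau)) :=
    mul_nonneg (mul_nonneg (by linarith) (by linarith)) (by nlinarith)
  refine le_of_mul_le_mul_right ?_ (by nlinarith : 0 < κ * (tau + 1))
  rw [h_sq]
  linear_combination κ * h_nonneg - κ * h_diff +
    2 * (tau - 1) * κ * (2 * tau - 1 + 2 * (tau - 1) * κ) * h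

theorem admissibleExponents_gfun (hγ : 2 ≤ γ) :
    AdmissibleExponents γ (gfun γ) (tau ^ 2 * γ - 2)⁻¹ := by
  obtain ⟨h_lower, h_upper⟩ := tau_mem_Ioo
  have h_den : 2 * tau ≤ tau ^ 2 * γ - 2 := by nlinarith [tau_sq]
  have h_den_pos : 0 < tau ^ 2 * γ - 2 := by linarith
  have hκ_pos : 0 < (tau ^ 2 * γ - 2)⁻¹ := inv_pos.mpr h_den_pos
  have hκ_le : 2 * tau * (tau ^ 2 * γ - 2)⁻¹ ≤ 1 := mul_inv_le_one_of_le₀ h_den h_den_pos.le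
  have hκ : (tau ^ 2 * γ - 2)⁻¹ * γ * (tau + 1) = 1 + 2 * (tau ^ 2 * γ - 2)⁻¹ := by
    linear_combination inv_mul_cancel₀ h_den_pos.ne' - (tau ^ 2 * γ - 2)⁻¹ * γ * tau_sq
  have h_one_lt : 1 < tau + 2 * (tau - 1) * (tau ^ 2 * γ - 2)⁻¹ := by nlinarith
  have h_le_two : tau + 2 * (tau - 1) * (tau ^ 2 * γ - 2)⁻¹ ≤ 2 := by
    linear_combination (tau - 1) ^ 2 * hκ_le +
      (1 - 2 * (tau - 1) * (tau ^ 2 * γ - 2)⁻¹) * tau_sq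
  rw [gfun_eq]
  exact ⟨hγ, h_one_lt, h_le_two, hκ_pos, gfun_sub_one_le hκ_pos.le hκ,
    mul_gfun_sq_sub_le hκ_pos hκ_le hκ⟩

end Exponents

/-! ### From finitely many approximations to none -/

section Conclusion

variable {α₁ α₂ g K Γ γ : ℝ} {v : Fin 3 → ℤ} {m : ℤ × ℤ}

theorem eventually_noPositiveApprox (hg : 0 < g)
    (h_pos : ∀ m : ℤ × ℤ, m ≠ 0 → 0 < nint (α₁ * m.1 + α₂ * m.2))
    (h_fin : {x : ℤ × ℤ | 0 < x.1 ∧ 0 < x.2 ∧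
      nint (α₁ * x.1 + α₂ * x.2) * ((max x.1 x.2 : ℤ) : ℝ) ^ g ≤ K}.Finite) :
    ∀ᶠ B in atTop, NoPositiveApprox α₁ α₂ g K B := by
  have h_large : ∀ x : ℤ × ℤ, 0 < x.1 →
      ∀ᶠ B : ℝ in atTop, K < nint (α₁ * x.1 + α₂ * x.2) * B ^ g := fun x hx =>
    ((tendsto_rpow_atTop hg).const_mul_atTop
      (h_pos x (ne_of_apply_ne Prod.fst hx.ne'))).eventually_gt_atTop K
  filter_upwards [(eventually_all_finite h_fin).mpr fun x hx => h_large x hx.1]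
    with B hB x h₁ h₂ hxB
  have h_height : ((max (x 1) (x 2) : ℤ) : ℝ) = height x := by
    rw [height_eq_intCast, abs_of_pos h₁, abs_of_pos h₂]
  have h_rpow : height x ^ g ≤ B ^ g := Real.rpow_le_rpow (height_nonneg x) hxB hg.le
  have h_nint := nint_le_abs_linForm (α₁ := α₁) (α₂ := α₂) x
  have hB_rpow : 0 ≤ B ^ g := Real.rpow_nonneg ((height_nonneg x).trans hxB) g
  refine lt_of_lt_of_le ?_ (mul_le_mul_of_nonneg_right h_nint hB_rpow)
  by_cases hx : nint (α₁ * x 1 + α₂ * x 2) * height x ^ g ≤ K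
  · exact hB (x 1, x 2) ⟨h₁, h₂, by rwa [h_height]⟩
  · exact (not_le.mp hx).trans_le (mul_le_mul_of_nonneg_left h_rpow (abs_nonneg _))

theorem nint_pos_of_diophantine (hΓ : 0 < Γ)
    (hdio : ∀ m : ℤ × ℤ, m ≠ 0 →
      Γ / ((max |m.1| |m.2| : ℤ) : ℝ) ^ γ ≤ nint (α₁ * m.1 + α₂ * m.2))
    (hm : m ≠ 0) : 0 < nint (α₁ * m.1 + α₂ * m.2) := by
  refine (div_pos hΓ (Real.rpow_pos_of_pos (Int.cast_pos.mpr ?_) γ)).trans_le (hdio m hm)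
  rw [lt_max_iff, abs_pos, abs_pos]
  contrapose! hm
  exact Prod.ext hm.1 hm.2

theorem div_height_rpow_le_abs_linForm
    (hdio : ∀ m : ℤ × ℤ, m ≠ 0 →
      Γ / ((max |m.1| |m.2| : ℤ) : ℝ) ^ γ ≤ nint (α₁ * m.1 + α₂ * m.2))
    (hv : 0 < height v) : Γ / height v ^ γ ≤ |linForm α₁ α₂ v| := by
  rw [height_eq_intCast] at hv ⊢
  refine (hdio (v 1, v 2) fun h => ?_).trans (nint_le_abs_linForm v)
  rw [Prod.mk_eq_zero] at h
  simp [h] at hv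

end Conclusion

end Schmidt

/-- Theorem 2: under the Diophantine condition ‖α₁m₁+α₂m₂‖ ≥ Γ/(max{|m₁|,|m₂|})^γ
there are infinitely many integer vectors (x₁,x₂) with positive coordinates and
‖α₁x₁ + α₂x₂‖ · (max{x₁,x₂})^{g(γ)} ≤ C(Γ). -/
theorem schmidt_positive_approx_diophantine (α₁ α₂ Γ γ : ℝ)
    (hΓ : Γ ∈ Set.Ioo (0 : ℝ) 1) (hγ : 2 ≤ γ)
    (hdio : ∀ m : ℤ × ℤ, m ≠ 0 →
      Γ / ((max |m.1| |m.2| : ℤ) : ℝ) ^ γ ≤ nint (α₁ * m.1 + α₂ * m.2)) :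
    {x : ℤ × ℤ | 0 < x.1 ∧ 0 < x.2 ∧
      nint (α₁ * x.1 + α₂ * x.2) * ((max x.1 x.2 : ℤ) : ℝ) ^ gfun γ ≤ Cconst Γ γ}.Infinite := by
  intro h_fin
  have hE := Schmidt.admissibleExponents_gfun hγ
  rw [Schmidt.Cconst_eq] at h_fin
  have h_eventually := Schmidt.eventually_noPositiveApprox (one_pos.trans hE.one_lt)
    (fun _ => Schmidt.nint_pos_of_diophantine hΓ.1 hdio) h_fin
  obtain ⟨B₀, hB₀⟩ := Filter.eventually_atTop.mp
    (h_eventually.and (Filter.eventually_gt_atTop (2 : ℝ)))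
  exact Schmidt.not_forall_noPositiveApprox hΓ hE (hB₀ B₀ le_rfl).2
    (fun _ => Schmidt.div_height_rpow_le_abs_linForm hdio) fun B hB => (hB₀ B hB).1
end
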